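/- Let (A,ω,τ,G) be an ergodic C*-dynamical system with ω tracial, where G is a second countable topological group, Σ its Borel σ-algebra, μ σ-finite, right and left invariant, and (g,h,j,k) ↦ ω(τ_h(a₁) τ_g(a₂) τ_{gh}(a₃) τ_{jk}(a₄) τ_j(a₅) τ_k(a₆)) is Σ² × Σ²-measurable for all a₁,...,a₆ ∈ A. Assume there exist uniform Følner sequences (Λ_{1,n}) and (Λ_{2,n}) in G satisfying the Tempel'man condition and such that (Λ_{1,n}⁻¹Λ_{1,n}) and (Λ_{2,n}⁻¹Λ_{2,n}) are also Følner in G. Fix a GNS representation of (A,ω) and a, b, c ∈ A with at least one of ι(a), ι(b), ι(c*) in H_v, and set x_{g,h} := ι(τ_{gh}(a) τ_g(b) τ_h(c)). If (A,ω,τ,G) is asymptotically abelian with respect to (Λ_{1,n}), then lim_{n→∞} (1/(μ(Λ_{1,n})μ(Λ_{2,n}))) ∫_{Λ_{1,n}} ∫_{Λ_{2,n}} x_{g,h} dg dh = 0. -/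

import Mathlib

open MeasureTheory Filter Topology
open scoped Pointwise ComplexOrder

/-- The space `H_v` of flight vectors: the orthogonal complement of the closed span `H₀` of
the unimodular eigenvectors of the semigroup `S = {U g : g ∈ G}` of contractions. -/
noncomputable def flightVectors {G H : Type*} [NormedAddCommGroup H]
    [InnerProductSpace ℂ H] (U : G → H →L[ℂ] H) : Submodule ℂ H :=
  ((Submodule.span ℂ {x : H | x ≠ 0 ∧ ∃ lam : G → ℂ,
      ∀ g, ‖lam g‖ = 1 ∧ U g x = lam g • x}).topologicalClosure)ᗮ

/-!
Write `Ω = ι(1)`. As `ω` is tracial, right multiplication by `b` extends to a bounded operator `R_b`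
on `H`, and `x_{g,h} = R_{τ_h(c)} U_g R_b U_h ι(a)`. Averaging over `g ∈ Λ₂` replaces `U_g` by its
mean, which by ergodicity tends to the projection onto `ℂΩ`. What remains of `x_{g,h}` in the limit
is `⟪Ω, R_b U_h ι(a)⟫ U_h ι(c)`, with `⟪Ω, R_b U_h ι(a)⟫ = ⟪ι(b*), U_h ι(a)⟫`. Its average over
`h ∈ Λ₁` tends to zero because `U` is weakly mixing on `H_v`: a vector whose matrix coefficients
do not tend to zero in mean gives rise to a nonzero compact operator commuting with `U`, hence to an
eigenvector to which it is not orthogonal.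

The error in the replacement depends on `h`, and only its average over `h ∈ Λ₁` is small. By van der
Corput's lemma this average is controlled by the averages over `h` of
`⟪R_b U_h x, U_k R_b U_h x⟫`, which by traciality and ergodicity converge to
`⟪ι(b), U_k ι(b)⟫ ⟪x, U_k x⟫`. For a flight vector `x` these limits vanish in mean over `k`; for an
eigenvector `x` the mean ergodic theorem applies directly.

As `H` need not be separable, the operators `U_g` are only weakly measurable. All estimates of
vector-valued integrals are therefore made on inner products with a fixed unit vector `z`, uniformly
in `z`.
-/

open scoped ProbabilityTheory

section HilbertSpace

variable {H : Type*} [NormedAddCommGroup H] [InnerProductSpace ℂ H]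

theorem norm_le_of_forall_norm_inner_le {v : H} {C : ℝ} (hC : 0 ≤ C)
    (h : ∀ z : H, ‖z‖ = 1 → ‖inner ℂ z v‖ ≤ C) : ‖v‖ ≤ C := by
  rw [← innerSL_apply_norm ℂ v]
  refine ContinuousLinearMap.opNorm_le_of_unit_norm hC fun z hz => ?_
  rw [innerSL_apply_apply, norm_inner_symm]
  exact h z hz

theorem sub_inner_smul_mem_orthogonal {K : Submodule ℂ H} {Ω : H} (hΩ : ‖Ω‖ = 1)
    (hK : K ≤ ℂ ∙ Ω) (x : H) : x - inner ℂ Ω x • Ω ∈ Kᗮ := by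
  rw [← Submodule.starProjection_unit_singleton ℂ hΩ]
  exact Submodule.orthogonal_le hK (Submodule.sub_starProjection_mem_orthogonal x)

-- A finite orthonormal family whose trace is within `δ` of the supremum cannot be enlarged by a
-- unit vector `y` with `⟪y, T y⟫ > δ`.
theorem exists_orthonormal_forall_re_inner_le {T : H →L[ℂ] H} {M δ : ℝ} (hδ : 0 < δ)
    (trace_le : ∀ (n : ℕ) (e : Fin n → H), Orthonormal ℂ e →
      ∑ i, (inner ℂ (e i) (T (e i))).re ≤ M) :
    ∃ (n : ℕ) (e : Fin n → H),
      ∀ y, (∀ i, inner ℂ y (e i) = 0) → (inner ℂ y (T y)).re ≤ δ * ‖y‖ ^ 2 := by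
  let traces : Set ℝ :=
    {r | ∃ (n : ℕ) (e : Fin n → H), Orthonormal ℂ e ∧ r = ∑ i, (inner ℂ (e i) (T (e i))).re}
  have bdd : BddAbove traces := ⟨M, by rintro r ⟨n, e, he, rfl⟩; exact trace_le n e he⟩
  have nonempty : traces.Nonempty := ⟨0, 0, ![], .of_isEmpty _, by simp⟩
  obtain ⟨_, ⟨n, e, he, rfl⟩, near_max⟩ :=
    exists_lt_of_lt_csSup nonempty (sub_lt_self (sSup traces) hδ)
  have unit_vector : ∀ y, ‖y‖ = 1 → (∀ i, inner ℂ y (e i) = 0) → (inner ℂ y (T y)).re ≤ δ := by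
    intro y hy hye
    have := le_csSup bdd ⟨n + 1, _, orthonormal_vecCons_iff.2 ⟨hy, hye, he⟩, rfl⟩
    simp only [Fin.sum_univ_succ, Matrix.cons_val_zero, Matrix.cons_val_succ] at this
    linarith
  refine ⟨n, e, fun y hye => ?_⟩
  rcases eq_or_ne y 0 with rfl | hy
  · simp
  have hy' : ‖y‖ ≠ 0 := norm_ne_zero_iff.2 hy
  have := unit_vector ((‖y‖⁻¹ : ℂ) • y) (by simp [norm_smul, hy'])
    (fun i => by rw [inner_smul_left, hye i, mul_zero])
  rw [map_smul, inner_smul_left, inner_smul_right, ← Complex.ofReal_inv, Complex.conj_ofReal,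
    Complex.re_ofReal_mul, Complex.re_ofReal_mul] at this
  calc (inner ℂ y (T y)).re = ‖y‖ ^ 2 * (‖y‖⁻¹ * (‖y‖⁻¹ * (inner ℂ y (T y)).re)) := by
        field_simp
    _ ≤ ‖y‖ ^ 2 * δ := by gcongr
    _ = δ * ‖y‖ ^ 2 := mul_comm _ _

variable [CompleteSpace H]

theorem exists_clm_inner_eq {B : H → H → ℂ} {C : ℝ}
    (add_left : ∀ v v' w, B (v + v') w = B v w + B v' w)
    (smul_left : ∀ (c : ℂ) v w, B (c • v) w = starRingEnd ℂ c * B v w)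
    (add_right : ∀ v w w', B v (w + w') = B v w + B v w')
    (smul_right : ∀ (c : ℂ) v w, B v (c • w) = c * B v w)
    (bound : ∀ v w, ‖B v w‖ ≤ C * ‖v‖ * ‖w‖) :
    ∃ T : H →L[ℂ] H, ∀ v w, inner ℂ v (T w) = B v w := by
  let form : H →L⋆[ℂ] H →L[ℂ] ℂ :=
    (LinearMap.mk₂'ₛₗ (starRingEnd ℂ) (RingHom.id ℂ) B add_left smul_left add_right
      smul_right).mkContinuous₂ C bound
  refine ⟨(InnerProductSpace.continuousLinearMapOfBilin form).adjoint, fun v w => ?_⟩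
  rw [ContinuousLinearMap.adjoint_inner_right, InnerProductSpace.continuousLinearMapOfBilin_apply]
  rfl

-- Bounded sets of operators are relatively compact in the weak operator topology.
theorem exists_clm_tendsto_inner {ι : Type*} (F : Ultrafilter ι) {T : ι → H →L[ℂ] H} {C : ℝ}
    (hT : ∀ i, ‖T i‖ ≤ C) :
    ∃ S : H →L[ℂ] H, ∀ v w, Tendsto (fun i => inner ℂ v (T i w)) F (𝓝 (inner ℂ v (S w))) := by
  have bound : ∀ v w i, ‖inner ℂ v (T i w)‖ ≤ C * ‖v‖ * ‖w‖ := fun v w i => by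
    calc ‖inner ℂ v (T i w)‖ ≤ ‖v‖ * ‖T i w‖ := norm_inner_le_norm _ _
      _ ≤ ‖v‖ * (C * ‖w‖) := by gcongr; exact (T i).le_of_opNorm_le (hT i) w
      _ = C * ‖v‖ * ‖w‖ := by ring
  have hlim : ∀ v w, ∃ l : ℂ, Tendsto (fun i => inner ℂ v (T i w)) F (𝓝 l) := fun v w => by
    obtain ⟨l, -, hl⟩ := (isCompact_closedBall (0 : ℂ) (C * ‖v‖ * ‖w‖)).ultrafilter_le_nhds
      (F.map fun i => inner ℂ v (T i w)) (le_principal_iff.2 <| Ultrafilter.mem_map.2 <|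
        univ_mem' fun i => mem_closedBall_zero_iff.2 (bound v w i))
    exact ⟨l, hl⟩
  choose B hB using hlim
  obtain ⟨S, hS⟩ := exists_clm_inner_eq (B := B) (C := C)
    (fun v v' w => tendsto_nhds_unique (hB _ _) <| by
      simpa only [inner_add_left] using (hB v w).add (hB v' w))
    (fun c v w => tendsto_nhds_unique (hB _ _) <| by
      simpa only [inner_smul_left] using (hB v w).const_mul (starRingEnd ℂ c))
    (fun v w w' => tendsto_nhds_unique (hB _ _) <| by
      simpa only [map_add, inner_add_right] using (hB v w).add (hB v w'))
    (fun c v w => tendsto_nhds_unique (hB _ _) <| by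
      simpa only [map_smul, inner_smul_right] using (hB v w).const_mul c)
    (fun v w => le_of_tendsto (hB v w).norm (Eventually.of_forall (bound v w)))
  exact ⟨S, fun v w => hS v w ▸ hB v w⟩

theorem norm_apply_sq_le_of_isPositive {T : H →L[ℂ] H} (hT : T.IsPositive) (x : H) :
    ‖T x‖ ^ 2 ≤ ‖T‖ * (inner ℂ x (T x)).re := by
  obtain ⟨S, rfl⟩ := CStarAlgebra.nonneg_iff_eq_star_mul_self.1
    ((ContinuousLinearMap.nonneg_iff_isPositive T).2 hT)
  have hinner : (inner ℂ x ((star S * S) x)).re = ‖S x‖ ^ 2 := by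
    rw [mul_apply_eq_comp, ContinuousLinearMap.star_eq_adjoint,
      ContinuousLinearMap.adjoint_inner_right]
    exact inner_self_eq_norm_sq (𝕜 := ℂ) (S x)
  calc ‖(star S * S) x‖ ^ 2 ≤ (‖star S‖ * ‖S x‖) ^ 2 := by
        gcongr; exact (star S).le_opNorm (S x)
    _ = ‖star S * S‖ * (inner ℂ x ((star S * S) x)).re := by
        rw [hinner, CStarRing.norm_star_mul_self, norm_star]; ring

theorem isCompactOperator_of_isPositive_of_trace_le {T : H →L[ℂ] H} (hT : T.IsPositive) {M : ℝ}
    (trace_le : ∀ (n : ℕ) (e : Fin n → H), Orthonormal ℂ e →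
      ∑ i, (inner ℂ (e i) (T (e i))).re ≤ M) :
    IsCompactOperator T := by
  refine isClosed_setOfPred_isCompactOperator.closure_subset (Metric.mem_closure_iff.2 ?_)
  intro ε hε
  set δ : ℝ := (ε / 2) ^ 2 / (‖T‖ + 1) with hδ
  obtain ⟨n, e, small⟩ := exists_orthonormal_forall_re_inner_le (δ := δ) (by positivity) trace_le
  let E : Submodule ℂ H := Submodule.span ℂ (Set.range e)
  have : FiniteDimensional ℂ E := FiniteDimensional.span_of_finite ℂ (Set.finite_range e)
  refine ⟨T ∘L E.starProjection, ?_, ?_⟩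
  · exact (isCompactOperator_of_locallyCompactSpace_dom E.orthogonalProjectionOnto).clm_comp
      (T ∘L E.subtypeL)
  refine lt_of_le_of_lt ?_ (half_lt_self hε)
  rw [dist_eq_norm]
  refine ContinuousLinearMap.opNorm_le_bound _ (half_pos hε).le fun x => ?_
  set y := x - E.starProjection x with hy
  have hy_orth : y ∈ Eᗮ := E.sub_starProjection_mem_orthogonal x
  have hy_norm : ‖y‖ ≤ ‖x‖ := by
    rw [hy, ← Submodule.starProjection_orthogonal_val]
    exact Submodule.norm_starProjection_apply_le _ _
  have hTy : ‖T y‖ ^ 2 ≤ (ε / 2 * ‖x‖) ^ 2 :=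
    calc ‖T y‖ ^ 2 ≤ ‖T‖ * (inner ℂ y (T y)).re := norm_apply_sq_le_of_isPositive hT y
      _ ≤ (‖T‖ + 1) * (δ * ‖y‖ ^ 2) := by
        gcongr
        · exact hT.re_inner_nonneg_right y
        · linarith
        · exact small y fun i =>
            Submodule.inner_left_of_mem_orthogonal
              (Submodule.subset_span (Set.mem_range_self i)) hy_orth
      _ = (ε / 2 * ‖y‖) ^ 2 := by rw [hδ]; field_simp
      _ ≤ (ε / 2 * ‖x‖) ^ 2 := by gcongr
  calc ‖(T - T ∘L E.starProjection) x‖ = ‖T y‖ := by simp [hy]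
    _ ≤ ε / 2 * ‖x‖ := le_of_sq_le_sq hTy (by positivity)

end HilbertSpace

section JointEigenvectors

theorem exists_joint_eigenvector {G K V : Type*} [Field K] [IsAlgClosed K] [AddCommGroup V]
    [Module K V] (U : G → Module.End K V) (comm : ∀ g h, Commute (U g) (U h))
    {E : Submodule K V} [FiniteDimensional K E] (hE : E ≠ ⊥) (inv : ∀ g, ∀ x ∈ E, U g x ∈ E) :
    ∃ v ∈ E, v ≠ 0 ∧ ∀ g, ∃ c : K, U g v = c • v := by
  induction hn : Module.finrank K E using Nat.strong_induction_on generalizing E with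
  | _ n ih =>
  by_cases scalar : ∀ g, ∃ c : K, ∀ x ∈ E, U g x = c • x
  · obtain ⟨v, hv, hv0⟩ := Submodule.exists_mem_ne_zero_of_ne_bot hE
    exact ⟨v, hv, hv0, fun g => (scalar g).imp fun c hc => hc v hv⟩
  push Not at scalar
  obtain ⟨g, not_scalar⟩ := scalar
  have : Nontrivial E := Submodule.nontrivial_iff_ne_bot.2 hE
  obtain ⟨c, hc⟩ := Module.End.exists_eigenvalue ((U g).restrict (inv g))
  obtain ⟨w, hw⟩ := hc.exists_hasEigenvector
  let E' : Submodule K V := E ⊓ Module.End.eigenspace (U g) c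
  have hE'E : E' < E := by
    obtain ⟨x, hx, hxc⟩ := not_scalar c
    exact lt_of_le_of_ne inf_le_left fun h =>
      hxc (Module.End.mem_eigenspace_iff.1 (Submodule.mem_inf.1 (h ▸ hx)).2)
  have : FiniteDimensional K E' := Submodule.finiteDimensional_of_le hE'E.le
  have hwE' : (w : V) ∈ E' :=
    ⟨w.2, Module.End.mem_eigenspace_iff.2 (congrArg Subtype.val hw.apply_eq_smul)⟩
  have hE' : E' ≠ ⊥ :=
    E'.ne_bot_iff.2 ⟨w, hwE', fun h => hw.2 (Subtype.ext h)⟩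
  have inv' : ∀ k, ∀ x ∈ E', U k x ∈ E' := fun k x hx =>
    ⟨inv k x hx.1, (Module.End.mapsTo_genEigenspace_of_comm (comm g k) c 1 hx.2)⟩
  obtain ⟨v, hv, hv'⟩ := ih _ (hn ▸ Submodule.finrank_lt_finrank_of_lt hE'E) hE' inv' rfl
  exact ⟨v, hE'E.le hv, hv'⟩

theorem exists_joint_eigenvector_of_isCompactOperator {G H : Type*} [NormedAddCommGroup H]
    [InnerProductSpace ℂ H] [CompleteSpace H] {U : G → H →L[ℂ] H}
    (comm : ∀ g h, Commute (U g) (U h)) {T : H →L[ℂ] H} (compact : IsCompactOperator T)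
    (symm : T.IsSymmetric) (hT : T ≠ 0) (comm_T : ∀ g, Commute (U g) T) :
    ∃ v, T v ≠ 0 ∧ ∀ g, ∃ c : ℂ, U g v = c • v := by
  obtain ⟨l, hl, hl0⟩ : ∃ l, Module.End.HasEigenvalue T.toLinearMap l ∧ l ≠ 0 := by
    simpa using (ContinuousLinearMap.eq_zero_of_forall_hasEigenvalue_eq_zero compact symm).not.2 hT
  have := ContinuousLinearMap.finite_dimensional_eigenspace compact l hl0
  have comm' : ∀ {S S' : H →L[ℂ] H}, Commute S S' → Commute S.toLinearMap S'.toLinearMap :=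
    fun h => congrArg ContinuousLinearMap.toLinearMap h.eq
  obtain ⟨v, hv, hv0, eigen⟩ := exists_joint_eigenvector (fun g => (U g).toLinearMap)
    (fun g h => comm' (comm g h)) hl fun g x hx =>
      Module.End.mapsTo_genEigenspace_of_comm (comm' (comm_T g).symm) l 1 hx
  refine ⟨v, ?_, eigen⟩
  rw [show T v = l • v from Module.End.mem_eigenspace_iff.1 hv]
  exact smul_ne_zero hl0 hv0

end JointEigenvectors

section WeakMeans

variable {X : Type*} [MeasurableSpace X]

theorem norm_integral_le_of_ae_norm_le {E : Type*} [NormedAddCommGroup E] [NormedSpace ℝ E]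
    {ν : Measure X} [IsZeroOrProbabilityMeasure ν] {f : X → E} {C : ℝ} (hC : 0 ≤ C)
    (hf : ∀ᵐ x ∂ν, ‖f x‖ ≤ C) : ‖∫ x, f x ∂ν‖ ≤ C :=
  (norm_integral_le_of_norm_le_const hf).trans (mul_le_of_le_one_right hC measureReal_le_one)

theorem sq_integral_le_integral_sq {ν : Measure X} [IsZeroOrProbabilityMeasure ν] {f : X → ℝ}
    (hf : MemLp f 2 ν) : (∫ x, f x ∂ν) ^ 2 ≤ ∫ x, f x ^ 2 ∂ν := by
  rcases eq_zero_or_isProbabilityMeasure ν with rfl | _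
  · simp
  · have := ProbabilityTheory.variance_nonneg f ν
    rw [ProbabilityTheory.variance_eq_sub hf] at this
    simpa using this

variable {H : Type*} [NormedAddCommGroup H] [InnerProductSpace ℂ H]

theorem measurable_inner_swap {f g : X → H} (h : Measurable fun x => inner ℂ (f x) (g x)) :
    Measurable fun x => inner ℂ (g x) (f x) := by
  simpa only [Function.comp_def, inner_conj_symm] using Complex.continuous_conj.measurable.comp h

theorem measurable_inner_of_denseRange {ι : Type*} {j : ι → H} (hj : DenseRange j)
    {V : X → H →L[ℂ] H} (hV : ∀ a b, Measurable fun x => inner ℂ (j a) (V x (j b))) (v w : H) :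
    Measurable fun x => inner ℂ v (V x w) := by
  obtain ⟨v', hv', tendsto_v⟩ := mem_closure_iff_seq_limit.1 (hj v)
  obtain ⟨w', hw', tendsto_w⟩ := mem_closure_iff_seq_limit.1 (hj w)
  choose a ha using hv'
  choose b hb using hw'
  refine measurable_of_tendsto_metrizable (f := fun n x => inner ℂ (v' n) (V x (w' n)))
    (fun n => ?_) (tendsto_pi_nhds.2 fun x =>
      tendsto_v.inner (((V x).continuous.tendsto w).comp tendsto_w))
  simpa only [ha, hb] using hV (a n) (b n)

theorem norm_integral_le_of_forall_norm_inner_le [CompleteSpace H] {ν : Measure X} {F : X → H}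
    {φ : H → X → ℝ} (integrable : ∀ z, Integrable (φ z) ν)
    (le_φ : ∀ z x, ‖inner ℂ z (F x)‖ ≤ φ z x) {B : ℝ} (hB : 0 ≤ B)
    (integral_le : ∀ z, ‖z‖ = 1 → ∫ x, φ z x ∂ν ≤ B) : ‖∫ x, F x ∂ν‖ ≤ B := by
  by_cases hF : Integrable F ν
  · refine norm_le_of_forall_norm_inner_le hB fun z hz => ?_
    rw [← integral_inner hF]
    exact (norm_integral_le_of_norm_le (integrable z) (.of_forall (le_φ z))).trans
      (integral_le z hz)
  · rwa [integral_undef hF, norm_zero]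

/-- A uniformly bounded family of operators with measurable matrix coefficients, for which weak
integrals exist although the space may be nonseparable and the vector-valued functions
`x ↦ V x w` not strongly measurable. -/
structure IsBoundedWeaklyMeasurable (V : X → H →L[ℂ] H) : Prop where
  measurable_inner : ∀ v w, Measurable fun x => inner ℂ v (V x w)
  exists_norm_le : ∃ C, ∀ x, ‖V x‖ ≤ C

open Classical in
/-- The weak integral of a family of operators: `⟪v, weakMean ν V w⟫ = ∫ ⟪v, V x w⟫ ∂ν`. The value
is `0` if no such operator exists. -/
noncomputable def weakMean (ν : Measure X) (V : X → H →L[ℂ] H) : H →L[ℂ] H :=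
  if h : ∃ T : H →L[ℂ] H, ∀ v w, inner ℂ v (T w) = ∫ x, inner ℂ v (V x w) ∂ν then h.choose else 0

namespace IsBoundedWeaklyMeasurable

variable {V : X → H →L[ℂ] H}

theorem integrable_inner (hV : IsBoundedWeaklyMeasurable V) (ν : Measure X) [IsFiniteMeasure ν]
    (v w : H) : Integrable (fun x => inner ℂ v (V x w)) ν := by
  obtain ⟨C, hC⟩ := hV.exists_norm_le
  refine .of_bound (hV.measurable_inner v w).aestronglyMeasurable (‖v‖ * (C * ‖w‖)) (.of_forall ?_)
  exact fun x => (norm_inner_le_norm _ _).trans (by gcongr; exact (V x).le_of_opNorm_le (hC x) w)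

variable [CompleteSpace H]

theorem inner_weakMean (hV : IsBoundedWeaklyMeasurable V) (ν : Measure X) [IsFiniteMeasure ν]
    (v w : H) : inner ℂ v (weakMean ν V w) = ∫ x, inner ℂ v (V x w) ∂ν := by
  obtain ⟨C, hC⟩ := hV.exists_norm_le
  have bound : ∀ v w,
      ‖∫ x, inner ℂ v (V x w) ∂ν‖ ≤ ν.real Set.univ * C * ‖v‖ * ‖w‖ := fun v w => by
    refine (norm_integral_le_of_norm_le_const (C := ‖v‖ * (C * ‖w‖)) (.of_forall fun x => ?_)).trans
      (by linarith)
    exact (norm_inner_le_norm _ _).trans (by gcongr; exact (V x).le_of_opNorm_le (hC x) w)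
  have exists_mean : ∃ T : H →L[ℂ] H, ∀ v w, inner ℂ v (T w) = ∫ x, inner ℂ v (V x w) ∂ν :=
    exists_clm_inner_eq
      (fun v v' w => by
        simpa only [inner_add_left] using
          integral_add (hV.integrable_inner ν v w) (hV.integrable_inner ν v' w))
      (fun c v w => by simp only [inner_smul_left, integral_const_mul])
      (fun v w w' => by
        simpa only [map_add, inner_add_right] using
          integral_add (hV.integrable_inner ν v w) (hV.integrable_inner ν v w'))
      (fun c v w => by simp only [map_smul, inner_smul_right, integral_const_mul])
      bound
  rw [weakMean, dif_pos exists_mean]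
  exact exists_mean.choose_spec v w

-- Without strong measurability the Bochner integral may take the junk value `0`.
theorem norm_inner_integral_le (hV : IsBoundedWeaklyMeasurable V) (ν : Measure X)
    [IsFiniteMeasure ν] (L : H →L[ℂ] H) (z v : H) :
    ‖inner ℂ z (∫ x, L (V x v) ∂ν)‖ ≤ ‖inner ℂ z (L (weakMean ν V v))‖ := by
  by_cases h : Integrable (fun x => L (V x v)) ν
  · rw [← integral_inner h, ← L.adjoint_inner_left, hV.inner_weakMean]
    simp only [L.adjoint_inner_left, le_refl]
  · rw [integral_undef h, inner_zero_right, norm_zero]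
    exact norm_nonneg _

theorem norm_weakMean_apply_le (hV : IsBoundedWeaklyMeasurable V) {ν : Measure X}
    [IsZeroOrProbabilityMeasure ν] {w : H} {C : ℝ} (hC : 0 ≤ C) (hVw : ∀ᵐ x ∂ν, ‖V x w‖ ≤ C) :
    ‖weakMean ν V w‖ ≤ C := by
  refine norm_le_of_forall_norm_inner_le hC fun z hz => ?_
  rw [hV.inner_weakMean]
  refine norm_integral_le_of_ae_norm_le hC (hVw.mono fun x hx => ?_)
  exact (norm_inner_le_norm z (V x w)).trans (by rwa [hz, one_mul])

theorem inner_weakMean_weakMean (hV : IsBoundedWeaklyMeasurable V) (ν : Measure X)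
    [IsFiniteMeasure ν] (v w : H) :
    inner ℂ (weakMean ν V v) (weakMean ν V w) = ∫ x, ∫ y, inner ℂ (V y v) (V x w) ∂ν ∂ν := by
  rw [hV.inner_weakMean]
  refine integral_congr_ae (.of_forall fun x => ?_)
  simp only [← inner_conj_symm _ (V x w), hV.inner_weakMean, ← integral_conj]

theorem norm_weakMean_sq_le (hV : IsBoundedWeaklyMeasurable V) (ν : Measure X)
    [IsFiniteMeasure ν] (w : H) (measurable_joint : Measurable fun p : X × X =>
      inner ℂ (V p.1 w) (V p.2 w)) :
    ‖weakMean ν V w‖ ^ 2 ≤ ∫ x, ∫ y, ‖inner ℂ (V y w) (V x w)‖ ∂ν ∂ν := by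
  obtain ⟨C, hC⟩ := hV.exists_norm_le
  have bound : ∀ x y, ‖inner ℂ (V y w) (V x w)‖ ≤ (C * ‖w‖) * (C * ‖w‖) := fun x y => by
    refine (norm_inner_le_norm _ _).trans ?_
    have := fun x => (V x).le_of_opNorm_le (hC x) w
    exact mul_le_mul (this y) (this x) (norm_nonneg _) ((norm_nonneg _).trans (this y))
  have integrable : Integrable (fun x => ∫ y, ‖inner ℂ (V y w) (V x w)‖ ∂ν) ν :=
    (Integrable.of_bound (measurable_joint.comp measurable_swap).norm.aestronglyMeasurable _
      (.of_forall fun p => by simpa using bound p.1 p.2) : Integrable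
        (fun p : X × X => ‖inner ℂ (V p.2 w) (V p.1 w)‖) (ν.prod ν)).integral_prod_left
  calc ‖weakMean ν V w‖ ^ 2 = ‖∫ x, ∫ y, inner ℂ (V y w) (V x w) ∂ν ∂ν‖ := by
        rw [← hV.inner_weakMean_weakMean, inner_self_eq_norm_sq_to_K]; simp
    _ ≤ ∫ x, ∫ y, ‖inner ℂ (V y w) (V x w)‖ ∂ν ∂ν :=
        norm_integral_le_of_norm_le integrable
          (.of_forall fun x => norm_integral_le_integral_norm _)

-- Absorb the phases of `⟪z, V x w⟫` into `V`, so that the integral becomes a matrix coefficient of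
-- the resulting weak mean.
theorem sq_integral_norm_inner_le (hV : IsBoundedWeaklyMeasurable V) (ν : Measure X)
    [IsFiniteMeasure ν] (z w : H) (measurable_joint : Measurable fun p : X × X =>
      inner ℂ (V p.1 w) (V p.2 w)) :
    (∫ x, ‖inner ℂ z (V x w)‖ ∂ν) ^ 2 ≤
      ‖z‖ ^ 2 * ∫ x, ∫ y, ‖inner ℂ (V y w) (V x w)‖ ∂ν ∂ν := by
  let phase : X → ℂ := fun x => Complex.exp ((-(inner ℂ z (V x w)).arg : ℝ) * Complex.I)
  have measurable_phase : Measurable phase := by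
    have := hV.measurable_inner z w
    fun_prop
  have norm_phase : ∀ x, ‖phase x‖ = 1 := fun x => Complex.norm_exp_ofReal_mul_I _
  have phase_mul : ∀ x, phase x * inner ℂ z (V x w) = ‖inner ℂ z (V x w)‖ := fun x => by
    rw [← Complex.norm_mul_exp_arg_mul_I (inner ℂ z (V x w)), mul_left_comm, ← Complex.exp_add]
    simp
  let W : X → H →L[ℂ] H := fun x => phase x • V x
  have hW : IsBoundedWeaklyMeasurable W := by
    refine ⟨fun v w => ?_, hV.exists_norm_le.imp fun C hC x => ?_⟩
    · simpa only [W, smul_apply, inner_smul_right] using!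
        measurable_phase.mul (hV.measurable_inner v w)
    · simpa only [W, norm_smul, norm_phase, one_mul] using hC x
  have inner_W : ∀ x y, inner ℂ (W x w) (W y w) =
      starRingEnd ℂ (phase x) * phase y * inner ℂ (V x w) (V y w) := fun x y => by
    simp only [W, smul_apply, inner_smul_left, inner_smul_right]; ring
  have eq_norm_inner : ∫ x, ‖inner ℂ z (V x w)‖ ∂ν = ‖inner ℂ z (weakMean ν W w)‖ := by
    rw [hW.inner_weakMean]
    simp only [W, smul_apply, inner_smul_right, phase_mul]
    rw [integral_complex_ofReal, Complex.norm_of_nonneg (integral_nonneg fun _ => norm_nonneg _)]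
  calc (∫ x, ‖inner ℂ z (V x w)‖ ∂ν) ^ 2 ≤ (‖z‖ * ‖weakMean ν W w‖) ^ 2 := by
        rw [eq_norm_inner]; gcongr; exact norm_inner_le_norm _ _
    _ = ‖z‖ ^ 2 * ‖weakMean ν W w‖ ^ 2 := mul_pow _ _ _
    _ ≤ ‖z‖ ^ 2 * ∫ x, ∫ y, ‖inner ℂ (W y w) (W x w)‖ ∂ν ∂ν := by
        gcongr
        refine hW.norm_weakMean_sq_le ν w ?_
        simp only [inner_W]
        fun_prop
    _ = ‖z‖ ^ 2 * ∫ x, ∫ y, ‖inner ℂ (V y w) (V x w)‖ ∂ν ∂ν := by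
        simp only [inner_W, norm_mul, RCLike.norm_conj, norm_phase, one_mul]

end IsBoundedWeaklyMeasurable

end WeakMeans

section Folner

theorem norm_setIntegral_sub_setIntegral_le {X E : Type*} [MeasurableSpace X]
    [NormedAddCommGroup E] [NormedSpace ℝ E] {μ : Measure X} {s t : Set X} (hs : MeasurableSet s)
    (ht : MeasurableSet t) (hμs : μ s ≠ ⊤) (hμt : μ t ≠ ⊤) {f : X → E}
    (hf : AEStronglyMeasurable f μ) {C : ℝ} (hC : ∀ x, ‖f x‖ ≤ C) :
    ‖∫ x in s, f x ∂μ - ∫ x in t, f x ∂μ‖ ≤ C * μ.real (symmDiff s t) := by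
  have hst : μ (s \ t) < ⊤ := measure_lt_top_of_subset Set.sdiff_subset hμs
  have hts : μ (t \ s) < ⊤ := measure_lt_top_of_subset Set.sdiff_subset hμt
  rw [← integral_inter_add_sdiff ht (Measure.integrableOn_of_bounded hμs hf (.of_forall hC)),
    ← integral_inter_add_sdiff hs (Measure.integrableOn_of_bounded hμt hf (.of_forall hC)),
    Set.inter_comm t s, add_sub_add_left_eq_sub,
    measureReal_symmDiff_eq hs ht, mul_add]
  exact (norm_sub_le _ _).trans <| add_le_add
    (norm_setIntegral_le_of_norm_le_const hst fun x _ => hC x)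
    (norm_setIntegral_le_of_norm_le_const hts fun x _ => hC x)

theorem integral_cond_eq {X E : Type*} [MeasurableSpace X] [NormedAddCommGroup E]
    [NormedSpace ℝ E] (μ : Measure X) (s : Set X) (f : X → E) :
    ∫ x, f x ∂μ[|s] = (μ.real s)⁻¹ • ∫ x in s, f x ∂μ := by
  rw [ProbabilityTheory.cond, integral_smul_measure, ENNReal.toReal_inv, measureReal_def]

variable {G : Type*} [Group G] [MeasurableSpace G]

/-- Følner sequences. The conditions on the single sets are only imposed for large `n`, so that the
notion also applies to `Λ n⁻¹ * Λ n`. -/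
structure IsFolner (μ : Measure G) (Λ : ℕ → Set G) : Prop where
  measurableSet : ∀ᶠ n in atTop, MeasurableSet (Λ n)
  measure_pos_lt_top : ∀ᶠ n in atTop, 0 < μ (Λ n) ∧ μ (Λ n) < ⊤
  tendsto_symmDiff : ∀ g, Tendsto
    (fun n => μ.real (symmDiff (Λ n) (Λ n * {g})) / μ.real (Λ n)) atTop (𝓝 0)

/-- Uniform Følner sequences. -/
structure IsUniformFolner (μ : Measure G) (Λ : ℕ → Set G) : Prop extends IsFolner μ Λ where
  symmDiff_le : ∀ᶠ m in atTop, ∀ ε > (0 : ℝ), ∀ᶠ n in atTop, ∀ g ∈ Λ m,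
    μ.real (symmDiff (Λ n) (Λ n * {g})) ≤ ε * μ.real (Λ n)

/-- The Tempel'man condition. -/
def IsTempelman (μ : Measure G) (Λ : ℕ → Set G) : Prop :=
  ∃ c : ℝ, 0 < c ∧ ∀ᶠ n in atTop, MeasurableSet ((Λ n)⁻¹ * Λ n) ∧
    μ ((Λ n)⁻¹ * Λ n) ≤ ENNReal.ofReal c * μ (Λ n)

theorem IsTempelman.eventually_measurableSet {μ : Measure G} {Λ : ℕ → Set G}
    (tempelman : IsTempelman μ Λ) : ∀ᶠ n in atTop, MeasurableSet ((Λ n)⁻¹ * Λ n) :=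
  let ⟨_, _, h⟩ := tempelman
  h.mono fun _ hn => hn.1

theorem isMulRightInvariant_of_measure_mul_singleton [MeasurableMul G] {μ : Measure G}
    (h : ∀ (s : Set G) (g : G), MeasurableSet s → μ (s * {g}) = μ s) : μ.IsMulRightInvariant where
  map_mul_right_eq_self g := Measure.ext fun s hs => by
    rw [Measure.map_apply (measurable_mul_const g) hs, ← h _ g (measurable_mul_const g hs),
      Set.mul_singleton, Set.image_preimage_eq _ (mul_right_surjective g)]

theorem setIntegral_mul_right_eq [MeasurableMul G] {E : Type*} [NormedAddCommGroup E]
    [NormedSpace ℝ E] (μ : Measure G) [μ.IsMulRightInvariant] (L : Set G) (k : G) (f : G → E) :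
    ∫ g in L, f (g * k) ∂μ = ∫ g in L * {k}, f g ∂μ := by
  rw [← (measurePreserving_mul_right μ k).setIntegral_preimage_emb
    (measurableEmbedding_mulRight k) f, Set.mul_singleton, Set.image_mul_right,
    ← Set.preimage_comp]
  simp [Function.comp_def]

theorem integral_cond_mul_inv_le {G : Type*} [CommGroup G] [MeasurableSpace G] [MeasurableMul G]
    {μ : Measure G} [μ.IsMulRightInvariant] {L : Set G} {f : G → ℝ} (hf0 : ∀ g, 0 ≤ f g)
    (hf : IntegrableOn f (L⁻¹ * L) μ) (pos : 0 < μ.real (L⁻¹ * L)) {c : ℝ}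
    (hc : μ.real (L⁻¹ * L) ≤ c * μ.real L) {h : G} (hh : h ∈ L) :
    ∫ k, f (k * h⁻¹) ∂μ[|L] ≤ c * ∫ g, f g ∂μ[|L⁻¹ * L] := by
  have subset : L * {h⁻¹} ⊆ L⁻¹ * L := by
    rintro _ ⟨g, hg, _, rfl, rfl⟩
    exact ⟨h⁻¹, Set.inv_mem_inv.2 hh, g, hg, mul_comm _ _⟩
  have hL : 0 < μ.real L := by
    refine measureReal_nonneg.lt_of_ne fun h0 => ?_
    rw [← h0, mul_zero] at hc
    exact hc.not_gt pos
  have integral_nonneg : 0 ≤ ∫ g in L⁻¹ * L, f g ∂μ := integral_nonneg hf0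
  rw [integral_cond_eq, integral_cond_eq, setIntegral_mul_right_eq, smul_eq_mul, smul_eq_mul]
  calc (μ.real L)⁻¹ * ∫ g in L * {h⁻¹}, f g ∂μ
      ≤ (μ.real L)⁻¹ * ∫ g in L⁻¹ * L, f g ∂μ := by
        exact mul_le_mul_of_nonneg_left
          (setIntegral_mono_set hf (.of_forall hf0) subset.eventuallyLE) (by positivity)
    _ ≤ c / μ.real (L⁻¹ * L) * ∫ g in L⁻¹ * L, f g ∂μ := by
        gcongr
        rwa [inv_le_iff_one_le_mul₀ hL, div_mul_eq_mul_div, one_le_div pos]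
    _ = c * ((μ.real (L⁻¹ * L))⁻¹ * ∫ g in L⁻¹ * L, f g ∂μ) := by ring

theorem norm_integral_cond_mul_right_sub_le [MeasurableMul G] {E : Type*} [NormedAddCommGroup E]
    [NormedSpace ℝ E] {μ : Measure G} [μ.IsMulRightInvariant] {L : Set G} (hL : MeasurableSet L)
    (hμL : μ L ≠ ⊤) (k : G) {f : G → E} (hf : AEStronglyMeasurable f μ) {C : ℝ}
    (hC : ∀ g, ‖f g‖ ≤ C) :
    ‖∫ g, f (g * k) ∂μ[|L] - ∫ g, f g ∂μ[|L]‖ ≤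
      C * (μ.real (symmDiff L (L * {k})) / μ.real L) := by
  have hLk : MeasurableSet (L * {k}) := by
    simpa only [Set.mul_singleton, Set.image_mul_right] using measurable_mul_const k⁻¹ hL
  have hμLk : μ (L * {k}) ≠ ⊤ := by
    rwa [Set.mul_singleton, Set.image_mul_right, measure_preimage_mul_right]
  rw [integral_cond_eq, integral_cond_eq, setIntegral_mul_right_eq, ← smul_sub, norm_smul, norm_inv,
    Real.norm_of_nonneg measureReal_nonneg, norm_sub_rev]
  calc (μ.real L)⁻¹ * ‖∫ g in L, f g ∂μ - ∫ g in L * {k}, f g ∂μ‖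
      ≤ (μ.real L)⁻¹ * (C * μ.real (symmDiff L (L * {k}))) := by
        gcongr; exact norm_setIntegral_sub_setIntegral_le hL hLk hμL hμLk hf hC
    _ = C * (μ.real (symmDiff L (L * {k})) / μ.real L) := by ring

theorem IsFolner.tendsto_integral_mul_right_sub [MeasurableMul G] {E : Type*}
    [NormedAddCommGroup E] [NormedSpace ℝ E] {μ : Measure G} [μ.IsMulRightInvariant]
    {Λ : ℕ → Set G} (hΛ : IsFolner μ Λ) (k : G) {f : G → E} (hf : AEStronglyMeasurable f μ) {C : ℝ}
    (hC : ∀ g, ‖f g‖ ≤ C) :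
    Tendsto (fun n => ∫ g, f (g * k) ∂μ[|Λ n] - ∫ g, f g ∂μ[|Λ n]) atTop (𝓝 0) := by
  refine squeeze_zero_norm' ?_ (by simpa only [mul_zero] using (hΛ.tendsto_symmDiff k).const_mul C)
  filter_upwards [hΛ.measurableSet, hΛ.measure_pos_lt_top] with n hn hn'
  exact norm_integral_cond_mul_right_sub_le hn hn'.2.ne k hf hC

end Folner

section MeanErgodicTheorem

variable {G H : Type*} [NormedAddCommGroup H] [InnerProductSpace ℂ H]

/-- The vectors fixed by all operators of the family `U`. -/
def fixedVectors (U : G → H →L[ℂ] H) : Submodule ℂ H where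
  carrier := {x | ∀ g, U g x = x}
  add_mem' hx hy g := by rw [map_add, hx g, hy g]
  zero_mem' g := map_zero _
  smul_mem' c x hx g := by rw [map_smul, hx g]

/-- The closed span `H₀` of the unimodular eigenvectors; `flightVectors U` is its orthogonal
complement. -/
def almostPeriodicVectors (U : G → H →L[ℂ] H) : Submodule ℂ H :=
  (Submodule.span ℂ {x : H | x ≠ 0 ∧ ∃ lam : G → ℂ,
    ∀ g, ‖lam g‖ = 1 ∧ U g x = lam g • x}).topologicalClosure

/-- The vectors along which a sequence of seminorms tends to zero. -/
def vanishingSubmodule (p : ℕ → Seminorm ℂ H) : Submodule ℂ H where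
  carrier := {x | Tendsto (p · x) atTop (𝓝 0)}
  add_mem' {x y} hx hy := squeeze_zero (fun _ => apply_nonneg _ _)
    (fun n => map_add_le_add (p n) x y) (by simpa using hx.add hy)
  zero_mem' := by simp
  smul_mem' c x hx := by simpa [map_smul_eq_mul] using! hx.const_mul ‖c‖

theorem isClosed_vanishingSubmodule {p : ℕ → Seminorm ℂ H} {C : ℝ} (hp : ∀ n x, p n x ≤ C * ‖x‖) :
    IsClosed (vanishingSubmodule p : Set H) := by
  refine isClosed_of_closure_subset fun x hx => ?_
  refine Metric.tendsto_atTop.2 fun ε hε => ?_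
  obtain ⟨y, hy, hxy⟩ := Metric.mem_closure_iff.1 hx (ε / (2 * (|C| + 1))) (by positivity)
  obtain ⟨N, hN⟩ := Metric.tendsto_atTop.1 hy (ε / 2) (half_pos hε)
  refine ⟨N, fun n hn => ?_⟩
  have hny : p n y < ε / 2 := (le_abs_self _).trans_lt (by simpa using hN n hn)
  rw [dist_zero_right, Real.norm_of_nonneg (apply_nonneg _ _)]
  calc p n x ≤ p n (x - y) + p n y := by simpa using map_add_le_add (p n) (x - y) y
    _ ≤ (|C| + 1) * ‖x - y‖ + p n y := by
        gcongr
        exact (hp n _).trans (by gcongr; linarith [le_abs_self C])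
    _ < (|C| + 1) * (ε / (2 * (|C| + 1))) + ε / 2 := by
        rw [dist_eq_norm] at hxy
        gcongr
    _ = ε := by field_simp; norm_num

theorem tendsto_clm_apply_of_denseRange {ι : Type*} {j : ι → H} (hj : DenseRange j)
    {f : ℕ → H →L[ℂ] ℂ} {C : ℝ} (hf : ∀ n, ‖f n‖ ≤ C)
    (h : ∀ a, Tendsto (fun n => f n (j a)) atTop (𝓝 0)) (x : H) :
    Tendsto (fun n => f n x) atTop (𝓝 0) := by
  let p : ℕ → Seminorm ℂ H := fun n => (normSeminorm ℂ ℂ).comp (f n).toLinearMap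
  have closed : IsClosed (vanishingSubmodule p : Set H) :=
    isClosed_vanishingSubmodule fun n y => (f n).le_of_opNorm_le (hf n) y
  have range_le : Set.range j ⊆ vanishingSubmodule p :=
    Set.range_subset_iff.2 fun a => tendsto_zero_iff_norm_tendsto_zero.1 (h a)
  exact tendsto_zero_iff_norm_tendsto_zero.2 (closure_minimal range_le closed (hj x))

theorem tendsto_inner_clm_apply_of_denseRange {ι : Type*} {j : ι → H} (hj : DenseRange j)
    {T : ℕ → H →L[ℂ] H} {S : H →L[ℂ] H} {C : ℝ} (hT : ∀ n, ‖T n‖ ≤ C)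
    (h : ∀ a b, Tendsto (fun n => inner ℂ (j a) (T n (j b))) atTop (𝓝 (inner ℂ (j a) (S (j b)))))
    (x y : H) : Tendsto (fun n => inner ℂ x (T n y)) atTop (𝓝 (inner ℂ x (S y))) := by
  have bound : ∀ n, ‖T n - S‖ ≤ C + ‖S‖ := fun n => (norm_sub_le _ _).trans (by gcongr; exact hT n)
  have right : ∀ a, Tendsto (fun n => inner ℂ (j a) ((T n - S) y)) atTop (𝓝 0) := fun a =>
    tendsto_clm_apply_of_denseRange hj (f := fun n => innerSL ℂ (j a) ∘L (T n - S))
      (C := ‖j a‖ * (C + ‖S‖)) (fun n => by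
        refine (ContinuousLinearMap.opNorm_comp_le _ _).trans ?_
        rw [innerSL_apply_norm]
        gcongr
        exact bound n) (fun b => by
        simpa [inner_sub_right] using tendsto_sub_nhds_zero_iff.2 (h a b)) y
  have left : Tendsto (fun n => inner ℂ ((T n - S) y) x) atTop (𝓝 0) :=
    tendsto_clm_apply_of_denseRange hj (f := fun n => innerSL ℂ ((T n - S) y))
      (C := (C + ‖S‖) * ‖y‖) (fun n => by
        rw [innerSL_apply_norm]
        exact (T n - S).le_of_opNorm_le (bound n) y) (fun a => by
        simpa [Function.comp_def] using (Complex.continuous_conj.tendsto _).comp (right a)) x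
  refine tendsto_sub_nhds_zero_iff.1 ?_
  simpa [Function.comp_def, inner_sub_right] using (Complex.continuous_conj.tendsto _).comp left

variable [MeasurableSpace G]

/-- Weakly measurable unitary representations. -/
structure IsMeasurableUnitaryRep [Group G] (U : G → H →L[ℂ] H) : Prop where
  map_one : U 1 = 1
  map_mul : ∀ g h, U (g * h) = U g * U h
  inner_map_map : ∀ g x y, inner ℂ (U g x) (U g y) = inner ℂ x y
  measurable_inner : ∀ x y, Measurable fun g => inner ℂ x (U g y)

namespace IsMeasurableUnitaryRep

section Group

variable [Group G] {U : G → H →L[ℂ] H}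

theorem norm_map (hU : IsMeasurableUnitaryRep U) (g : G) (x : H) : ‖U g x‖ = ‖x‖ := by
  rw [@norm_eq_sqrt_re_inner ℂ, hU.inner_map_map, ← norm_eq_sqrt_re_inner]

theorem norm_map_map_le (hU : IsMeasurableUnitaryRep U) (R : H →L[ℂ] H) (h : G) (x : H) :
    ‖R (U h x)‖ ≤ ‖R‖ * ‖x‖ :=
  (R.le_opNorm _).trans_eq (by rw [hU.norm_map])

theorem inv_apply_apply (hU : IsMeasurableUnitaryRep U) (g : G) (x : H) : U g⁻¹ (U g x) = x := by
  rw [← mul_apply_eq_comp, ← hU.map_mul, inv_mul_cancel, hU.map_one, one_apply_eq_self]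

theorem inner_map_left (hU : IsMeasurableUnitaryRep U) (g : G) (x y : H) :
    inner ℂ (U g x) y = inner ℂ x (U g⁻¹ y) := by
  rw [← hU.inner_map_map g⁻¹, hU.inv_apply_apply]

theorem isBoundedWeaklyMeasurable (hU : IsMeasurableUnitaryRep U) :
    IsBoundedWeaklyMeasurable U :=
  ⟨hU.measurable_inner, 1, fun g =>
    ContinuousLinearMap.opNorm_le_bound _ zero_le_one fun x => by rw [hU.norm_map, one_mul]⟩

theorem mem_fixedVectors_of_forall_inner_eq_zero (hU : IsMeasurableUnitaryRep U) {z : H}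
    (hz : ∀ g y, inner ℂ z (U g y - y) = 0) : z ∈ fixedVectors U := fun g => by
  rw [← sub_eq_zero, ← inner_self_eq_zero (𝕜 := ℂ), inner_sub_left, hU.inner_map_left,
    ← inner_sub_right]
  set y := U g z - z
  rw [← hz g⁻¹ y]

theorem inner_sub_smul_map (hU : IsMeasurableUnitaryRep U) {Ω : H} (hΩ : ‖Ω‖ = 1)
    (fixed : Ω ∈ fixedVectors U) (k : G) (x : H) :
    inner ℂ (x - inner ℂ Ω x • Ω) (U k (x - inner ℂ Ω x • Ω)) =
      inner ℂ x (U k x) - ((‖inner ℂ Ω x‖ ^ 2 : ℝ) : ℂ) := by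
  have inner_fixed : inner ℂ Ω (U k x) = inner ℂ Ω x := by
    rw [← hU.inner_map_map k Ω x, fixed k]
  have norm_sq : ((‖inner ℂ Ω x‖ ^ 2 : ℝ) : ℂ) = inner ℂ Ω x * inner ℂ x Ω := by
    rw [← inner_conj_symm x, RCLike.mul_conj]
    norm_cast
  rw [norm_sq]
  simp only [map_sub, map_smul, fixed k, inner_sub_left, inner_sub_right, inner_smul_left,
    inner_smul_right, inner_fixed, inner_conj_symm, inner_self_eq_norm_sq_to_K, hΩ]
  push_cast
  ring

end Group

variable [CommGroup G] {U : G → H →L[ℂ] H}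

theorem commute (hU : IsMeasurableUnitaryRep U) (g h : G) : Commute (U g) (U h) := by
  rw [commute_iff_eq, ← hU.map_mul, ← hU.map_mul, mul_comm]

theorem inner_map_map_eq (hU : IsMeasurableUnitaryRep U) (g h : G) (x y : H) :
    inner ℂ (U g x) (U h y) = inner ℂ x (U (h * g⁻¹) y) := by
  rw [hU.inner_map_left, mul_comm, hU.map_mul, mul_apply_eq_comp]

variable [CompleteSpace H]

theorem norm_weakMean_le (hU : IsMeasurableUnitaryRep U) (ν : Measure G)
    [IsZeroOrProbabilityMeasure ν] (x : H) : ‖weakMean ν U x‖ ≤ ‖x‖ :=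
  hU.isBoundedWeaklyMeasurable.norm_weakMean_apply_le (norm_nonneg x)
    (.of_forall fun g => (hU.norm_map g x).le)

theorem weakMean_eq_self (hU : IsMeasurableUnitaryRep U) (ν : Measure G)
    [IsProbabilityMeasure ν] {Ω : H} (fixed : Ω ∈ fixedVectors U) : weakMean ν U Ω = Ω := by
  refine ext_inner_left ℂ fun v => ?_
  rw [hU.isBoundedWeaklyMeasurable.inner_weakMean]
  simp only [fixed _, integral_const, probReal_univ, one_smul]

theorem norm_inner_integral_map_le (hU : IsMeasurableUnitaryRep U) (ν : Measure G)
    [IsProbabilityMeasure ν] {Ω : H} (fixed : Ω ∈ fixedVectors U) (L : H →L[ℂ] H) (z v : H) :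
    ‖inner ℂ z (∫ g, L (U g v) ∂ν)‖ ≤ ‖inner ℂ Ω v‖ * ‖inner ℂ z (L Ω)‖ +
      ‖z‖ * ‖L‖ * ‖weakMean ν U (v - inner ℂ Ω v • Ω)‖ := by
  have decomposition : weakMean ν U v =
      inner ℂ Ω v • Ω + weakMean ν U (v - inner ℂ Ω v • Ω) := by
    rw [map_sub, map_smul, hU.weakMean_eq_self ν fixed, add_sub_cancel]
  refine (hU.isBoundedWeaklyMeasurable.norm_inner_integral_le ν L z v).trans ?_
  rw [decomposition, map_add, map_smul, inner_add_right, inner_smul_right, ← norm_mul, mul_assoc]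
  refine (norm_add_le _ _).trans (add_le_add_right ((norm_inner_le_norm _ _).trans ?_) _)
  gcongr
  exact L.le_opNorm _

theorem measurable_inner_map_sub (hU : IsMeasurableUnitaryRep U) {Ω : H} (hΩ : ‖Ω‖ = 1)
    (fixed : Ω ∈ fixedVectors U) {R : H →L[ℂ] H} {x : H} (measurable_joint : Measurable
      fun p : G × G => inner ℂ (R (U p.1 x)) (U p.2 (R (U p.1 x)))) :
    Measurable fun p : G × G => inner ℂ (R (U p.1 x) - inner ℂ Ω (R (U p.1 x)) • Ω)
      (U p.2 (R (U p.1 x) - inner ℂ Ω (R (U p.1 x)) • Ω)) := by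
  simp only [hU.inner_sub_smul_map hΩ fixed]
  simp only [← R.adjoint_inner_left _ Ω]
  exact measurable_joint.sub (Complex.measurable_ofReal.comp
    (((hU.measurable_inner (R.adjoint Ω) x).comp measurable_fst).norm.pow_const 2))

variable [MeasurableMul G] {μ : Measure G} [μ.IsMulRightInvariant]

theorem norm_weakMean_map_sub_le (hU : IsMeasurableUnitaryRep U) {L : Set G}
    (hL : MeasurableSet L) (hμL : μ L ≠ ⊤) (k : G) (x : H) :
    ‖weakMean μ[|L] U (U k x) - weakMean μ[|L] U x‖ ≤
      μ.real (symmDiff L (L * {k})) / μ.real L * ‖x‖ := by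
  refine norm_le_of_forall_norm_inner_le (by positivity) fun z hz => ?_
  rw [inner_sub_right, hU.isBoundedWeaklyMeasurable.inner_weakMean,
    hU.isBoundedWeaklyMeasurable.inner_weakMean, mul_comm]
  simp only [← mul_apply_eq_comp, ← hU.map_mul]
  refine norm_integral_cond_mul_right_sub_le hL hμL k
    (hU.measurable_inner z x).aestronglyMeasurable fun g => ?_
  exact (norm_inner_le_norm _ _).trans_eq (by rw [hz, one_mul, hU.norm_map])

-- Von Neumann's argument: the averages tend to zero on the differences `U g y - y`, whose
-- orthogonal complement consists of fixed vectors.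
theorem tendsto_norm_weakMean (hU : IsMeasurableUnitaryRep U) {Λ : ℕ → Set G}
    (hΛ : IsFolner μ Λ) {x : H} (hx : x ∈ (fixedVectors U)ᗮ) :
    Tendsto (fun n => ‖weakMean μ[|Λ n] U x‖) atTop (𝓝 0) := by
  let p : ℕ → Seminorm ℂ H := fun n => (normSeminorm ℂ H).comp (weakMean μ[|Λ n] U).toLinearMap
  have closed : IsClosed (vanishingSubmodule p : Set H) :=
    isClosed_vanishingSubmodule (C := 1) fun n y => by
      simpa only [one_mul] using! hU.norm_weakMean_le μ[|Λ n] y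
  have difference_mem : ∀ g y, U g y - y ∈ vanishingSubmodule p := fun g y => by
    refine squeeze_zero' (.of_forall fun n => apply_nonneg _ _) ?_
      (by simpa only [zero_mul] using (hΛ.tendsto_symmDiff g).mul_const ‖y‖)
    filter_upwards [hΛ.measurableSet, hΛ.measure_pos_lt_top] with n hn hn'
    simpa [p] using hU.norm_weakMean_map_sub_le hn hn'.2.ne g y
  have orthogonal_le : (vanishingSubmodule p)ᗮ ≤ fixedVectors U := fun z hz =>
    hU.mem_fixedVectors_of_forall_inner_eq_zero fun g y =>
      Submodule.inner_left_of_mem_orthogonal (difference_mem g y) hz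
  have : CompleteSpace (vanishingSubmodule p) := closed.completeSpace_coe
  have hx' := Submodule.orthogonal_le orthogonal_le hx
  rwa [Submodule.orthogonal_orthogonal] at hx'

theorem tendsto_integral_inner (hU : IsMeasurableUnitaryRep U) {Λ : ℕ → Set G}
    (hΛ : IsFolner μ Λ) {Ω : H} (hΩ : ‖Ω‖ = 1) (fixed : Ω ∈ fixedVectors U)
    (ergodic : fixedVectors U ≤ ℂ ∙ Ω) (x y : H) :
    Tendsto (fun n => ∫ g, inner ℂ x (U g y) ∂μ[|Λ n]) atTop
      (𝓝 (inner ℂ x Ω * inner ℂ Ω y)) := by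
  have limit := ((tendsto_const_nhds (x := x)).inner (𝕜 := ℂ)
    (tendsto_zero_iff_norm_tendsto_zero.2 (hU.tendsto_norm_weakMean hΛ
      (sub_inner_smul_mem_orthogonal hΩ ergodic y)))).add_const (inner ℂ x Ω * inner ℂ Ω y)
  rw [inner_zero_right, zero_add] at limit
  refine limit.congr' ?_
  filter_upwards [hΛ.measure_pos_lt_top] with n hn
  have := ProbabilityTheory.cond_isProbabilityMeasure_of_finite hn.1.ne' hn.2.ne
  rw [← hU.isBoundedWeaklyMeasurable.inner_weakMean, map_sub, map_smul,
    hU.weakMean_eq_self _ fixed, inner_sub_right, inner_smul_right]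
  ring

theorem norm_weakMean_cond_le_add (hU : IsMeasurableUnitaryRep U) {L M : Set G}
    (hL : MeasurableSet L) (hμL : μ L ≠ ⊤) (hM : MeasurableSet M) (hμM : μ M ≠ 0)
    (hμM' : μ M ≠ ⊤) {ε : ℝ} (hε : ∀ g ∈ M, μ.real (symmDiff L (L * {g})) / μ.real L ≤ ε) (x : H) :
    ‖weakMean μ[|L] U x‖ ≤ ‖weakMean μ[|M] U x‖ + ε * ‖x‖ := by
  have := ProbabilityTheory.cond_isProbabilityMeasure_of_finite hμM hμM'
  have hU' := hU.isBoundedWeaklyMeasurable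
  obtain ⟨g₀, hg₀⟩ := nonempty_of_measure_ne_zero hμM
  have hε0 : 0 ≤ ε := le_trans (by positivity) (hε g₀ hg₀)
  set P := weakMean μ[|L] U
  set Q := weakMean μ[|M] U
  have almost_fixed : ‖P (Q x) - P x‖ ≤ ε * ‖x‖ := by
    refine norm_le_of_forall_norm_inner_le (by positivity) fun z hz => ?_
    have : inner ℂ z (P (Q x) - P x) = ∫ g, inner ℂ z (P (U g x) - P x) ∂μ[|M] := by
      simp only [inner_sub_right, ← P.adjoint_inner_left]
      rw [integral_sub (hU'.integrable_inner _ _ _) (integrable_const _),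
        hU'.inner_weakMean, integral_const, probReal_univ, one_smul]
    rw [this]
    refine norm_integral_le_of_ae_norm_le (by positivity) ?_
    refine ProbabilityTheory.ae_cond_of_forall_mem hM fun g hg => ?_
    calc ‖inner ℂ z (P (U g x) - P x)‖ ≤ ‖P (U g x) - P x‖ := by
          exact (norm_inner_le_norm _ _).trans_eq (by rw [hz, one_mul])
      _ ≤ ε * ‖x‖ := (hU.norm_weakMean_map_sub_le hL hμL g x).trans (by gcongr; exact hε g hg)
  calc ‖P x‖ ≤ ‖P (Q x)‖ + ‖P (Q x) - P x‖ := norm_le_norm_add_norm_sub _ _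
    _ ≤ ‖Q x‖ + ε * ‖x‖ := add_le_add (hU.norm_weakMean_le _ _) almost_fixed

theorem tendsto_integral_norm_weakMean_of_eigenvector (hU : IsMeasurableUnitaryRep U)
    (hΛ : IsFolner μ Λ) {T : H →L[ℂ] H} (hT : ∀ x, T x ∈ (fixedVectors U)ᗮ)
    {ρ : ℕ → Measure G} [∀ n, IsZeroOrProbabilityMeasure (ρ n)] {x : H} {lam : G → ℂ}
    (hx : ∀ g, ‖lam g‖ = 1 ∧ U g x = lam g • x) :
    Tendsto (fun n => ∫ h, ‖weakMean μ[|Λ n] U (T (U h x))‖ ∂ρ n) atTop (𝓝 0) := by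
  refine squeeze_zero (fun n => integral_nonneg fun _ => norm_nonneg _) (fun n => ?_)
    (hU.tendsto_norm_weakMean hΛ (hT x))
  refine (Real.le_norm_self _).trans (norm_integral_le_of_ae_norm_le (norm_nonneg _)
    (.of_forall fun h => ?_))
  rw [norm_norm, (hx h).2, map_smul, map_smul, norm_smul, (hx h).1, one_mul]

end IsMeasurableUnitaryRep

end MeanErgodicTheorem

section WeakMixing

variable {G H : Type*} [MeasurableSpace G] [NormedAddCommGroup H] [InnerProductSpace ℂ H]

/-- `S` is the limit along `F`, in the weak operator topology, of the averages with respect to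
`ν n` of the rank one operators `⟪U g y, ·⟫ U g y`. -/
def IsCovarianceLimit (U : G → H →L[ℂ] H) (ν : ℕ → Measure G) (y : H) (F : Filter ℕ)
    (S : H →L[ℂ] H) : Prop :=
  ∀ v w, Tendsto (fun n => ∫ g, inner ℂ v (U g y) * inner ℂ (U g y) w ∂ν n) F
    (𝓝 (inner ℂ v (S w)))

namespace IsMeasurableUnitaryRep

section Group

variable [Group G] {U : G → H →L[ℂ] H}

theorem mem_almostPeriodicVectors (hU : IsMeasurableUnitaryRep U) {x : H}
    (hx : ∀ g, ∃ c : ℂ, U g x = c • x) : x ∈ almostPeriodicVectors U := by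
  rcases eq_or_ne x 0 with rfl | hx0
  · exact zero_mem _
  choose c hc using hx
  have unimodular : ∀ g, ‖c g‖ = 1 := fun g => by
    have := hU.norm_map g x
    rw [hc, norm_smul] at this
    exact mul_right_cancel₀ (norm_ne_zero_iff.2 hx0) (this.trans (one_mul _).symm)
  exact Submodule.le_topologicalClosure _
    (Submodule.subset_span ⟨hx0, c, fun g => ⟨unimodular g, hc g⟩⟩)

theorem map_mem_flightVectors (hU : IsMeasurableUnitaryRep U) (g : G) {x : H}
    (hx : x ∈ flightVectors U) : U g x ∈ flightVectors U := by
  rw [flightVectors, Submodule.orthogonal_closure] at hx ⊢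
  refine fun v hv => ?_
  induction hv using Submodule.span_induction with
  | mem v hv =>
    obtain ⟨-, c, hc⟩ := id hv
    have := hx v (Submodule.subset_span hv)
    rw [← inner_conj_symm, hU.inner_map_left, (hc g⁻¹).2, inner_smul_right,
      inner_eq_zero_symm.1 this, mul_zero, map_zero]
  | zero => exact inner_zero_left _
  | add v w _ _ hv hw => rw [inner_add_left, hv, hw, add_zero]
  | smul c v _ hv => rw [inner_smul_left, hv, mul_zero]

theorem measurable_inner_left (hU : IsMeasurableUnitaryRep U) (x y : H) :
    Measurable fun g => inner ℂ (U g x) y :=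
  measurable_inner_swap (hU.measurable_inner y x)

theorem norm_inner_le (hU : IsMeasurableUnitaryRep U) (x y : H) (g : G) :
    ‖inner ℂ x (U g y)‖ ≤ ‖x‖ * ‖y‖ := by
  simpa only [hU.norm_map] using norm_inner_le_norm (𝕜 := ℂ) x (U g y)

theorem memLp_norm_inner (hU : IsMeasurableUnitaryRep U) (ν : Measure G) [IsFiniteMeasure ν]
    (x y : H) : MemLp (fun g => ‖inner ℂ x (U g y)‖) 2 ν :=
  .of_bound (hU.measurable_inner x y).norm.aestronglyMeasurable (‖x‖ * ‖y‖)
    (.of_forall fun g => by rw [norm_norm]; exact hU.norm_inner_le x y g)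

theorem integral_norm_inner_mul_le (hU : IsMeasurableUnitaryRep U) (ν : Measure G)
    [IsFiniteMeasure ν] (x y z w : H) :
    ∫ h, ‖inner ℂ x (U h y)‖ * ‖inner ℂ z (U h w)‖ ∂ν ≤
      ‖z‖ * ‖w‖ * ∫ h, ‖inner ℂ x (U h y)‖ ∂ν := by
  rw [← integral_const_mul]
  refine integral_mono
    ((hU.memLp_norm_inner ν x y).integrable_mul (hU.memLp_norm_inner ν z w))
    (((hU.memLp_norm_inner ν x y).integrable one_le_two).const_mul _) fun h => ?_
  beta_reduce
  rw [mul_comm]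
  gcongr
  exact hU.norm_inner_le z w h

variable [CompleteSpace H]

theorem exists_isCovarianceLimit (hU : IsMeasurableUnitaryRep U) (ν : ℕ → Measure G)
    [∀ n, IsZeroOrProbabilityMeasure (ν n)] (y : H) (F : Ultrafilter ℕ) :
    ∃ S, IsCovarianceLimit U ν y F S := by
  let V : G → H →L[ℂ] H := fun g => InnerProductSpace.rankOne ℂ (U g y) (U g y)
  have inner_V : ∀ g v w, inner ℂ v (V g w) = inner ℂ v (U g y) * inner ℂ (U g y) w :=
    fun g v w => by rw [InnerProductSpace.rankOne_apply, inner_smul_right, mul_comm]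
  have norm_V : ∀ g, ‖V g‖ = ‖y‖ * ‖y‖ := fun g => by
    rw [InnerProductSpace.norm_rankOne, hU.norm_map]
  have hV : IsBoundedWeaklyMeasurable V := by
    refine ⟨fun v w => ?_, ‖y‖ * ‖y‖, fun g => (norm_V g).le⟩
    simpa only [inner_V] using! (hU.measurable_inner v y).mul (hU.measurable_inner_left y w)
  obtain ⟨S, hS⟩ := exists_clm_tendsto_inner F (T := fun n => weakMean (ν n) V) (C := ‖y‖ * ‖y‖)
    fun n => ContinuousLinearMap.opNorm_le_bound _ (by positivity) fun w =>
      hV.norm_weakMean_apply_le (by positivity) <| .of_forall fun g =>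
        (V g).le_of_opNorm_le (norm_V g).le w
  exact ⟨S, fun v w => by simpa only [hV.inner_weakMean, inner_V] using hS v w⟩

end Group

end IsMeasurableUnitaryRep

namespace IsCovarianceLimit

variable {U : G → H →L[ℂ] H} {ν : ℕ → Measure G} {y : H} {F : Filter ℕ} {S : H →L[ℂ] H}

theorem tendsto_integral_norm_inner_sq (hS : IsCovarianceLimit U ν y F S) (v : H) :
    Tendsto (fun n => ((∫ g, ‖inner ℂ v (U g y)‖ ^ 2 ∂ν n : ℝ) : ℂ)) F (𝓝 (inner ℂ v (S v))) := by
  refine (hS v v).congr fun n => ?_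
  rw [← integral_complex_ofReal]
  refine integral_congr_ae (.of_forall fun g => ?_)
  beta_reduce
  rw [← inner_conj_symm (U g y) v, RCLike.mul_conj]
  norm_cast

theorem isPositive [F.NeBot] (hS : IsCovarianceLimit U ν y F S) : S.IsPositive := by
  have nonneg : ∀ v, 0 ≤ inner ℂ v (S v) := fun v =>
    ge_of_tendsto' (hS.tendsto_integral_norm_inner_sq v) fun n =>
      Complex.zero_le_real.2 (integral_nonneg fun g => by positivity)
  refine (ContinuousLinearMap.isPositive_iff_complex S).2 fun v => ?_
  obtain ⟨re_nonneg, im_eq_zero⟩ := Complex.nonneg_iff.1 (nonneg v)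
  rw [← inner_conj_symm, Complex.conj_eq_iff_im.2 im_eq_zero.symm]
  exact ⟨Complex.ext rfl im_eq_zero, re_nonneg⟩

theorem isCompactOperator [CompleteSpace H] [F.NeBot] [Group G]
    [∀ n, IsZeroOrProbabilityMeasure (ν n)] (hU : IsMeasurableUnitaryRep U)
    (hS : IsCovarianceLimit U ν y F S) : IsCompactOperator S := by
  refine isCompactOperator_of_isPositive_of_trace_le hS.isPositive (M := ‖y‖ ^ 2) fun n e he => ?_
  have trace_tendsto : Tendsto (fun n => ∑ i, ∫ g, ‖inner ℂ (e i) (U g y)‖ ^ 2 ∂ν n) F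
      (𝓝 (∑ i, (inner ℂ (e i) (S (e i))).re)) :=
    tendsto_finsetSum _ fun i _ =>
      (Complex.continuous_re.tendsto _).comp (hS.tendsto_integral_norm_inner_sq (e i))
  refine le_of_tendsto' trace_tendsto fun n => ?_
  rw [← integral_finsetSum _ fun i _ => (hU.memLp_norm_inner (ν n) (e i) y).integrable_sq]
  refine (Real.le_norm_self _).trans (norm_integral_le_of_ae_norm_le (by positivity) ?_)
  refine .of_forall fun g => ?_
  rw [Real.norm_of_nonneg (by positivity), ← hU.norm_map g y]
  exact he.sum_inner_products_le _

theorem commute [CommGroup G] [MeasurableMul G] {μ : Measure G} [μ.IsMulRightInvariant]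
    {Λ : ℕ → Set G} [F.NeBot] (hU : IsMeasurableUnitaryRep U) (hΛ : IsFolner μ Λ) (hF : F ≤ atTop)
    (hS : IsCovarianceLimit U (fun n => μ[|Λ n]) y F S) (k : G) : Commute (U k) S := by
  ext w
  refine ext_inner_left ℂ fun v => ?_
  rw [mul_apply_eq_comp, mul_apply_eq_comp, ← inv_inv k, ← hU.inner_map_left, inv_inv]
  let f : G → ℂ := fun g => inner ℂ v (U g y) * inner ℂ (U g y) (U k w)
  have hf : Measurable f := (hU.measurable_inner v y).mul (hU.measurable_inner_left y _)
  have bound : ∀ g, ‖f g‖ ≤ (‖v‖ * ‖y‖) * (‖U k w‖ * ‖y‖) := fun g => by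
    rw [norm_mul, norm_inner_symm (U g y)]
    gcongr <;> exact hU.norm_inner_le _ _ _
  have shift : ∀ g, f (g * k) = inner ℂ (U k⁻¹ v) (U g y) * inner ℂ (U g y) w := fun g => by
    simp only [f, mul_comm g k, hU.map_mul, mul_apply_eq_comp, hU.inner_map_map]
    rw [hU.inner_map_left k⁻¹, inv_inv]
  have limit_shift := (hS v (U k w)).add
    ((hΛ.tendsto_integral_mul_right_sub k hf.aestronglyMeasurable bound).mono_left hF)
  rw [add_zero] at limit_shift
  refine tendsto_nhds_unique (hS _ w) (limit_shift.congr fun n => ?_)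
  simp only [← shift]
  exact add_sub_cancel _ _

end IsCovarianceLimit

namespace IsMeasurableUnitaryRep

variable [CommGroup G] [MeasurableMul G] [CompleteSpace H] {U : G → H →L[ℂ] H} {μ : Measure G}
  [μ.IsMulRightInvariant] {Λ : ℕ → Set G}

-- A nonzero covariance limit would be a compact operator commuting with `U`, hence not vanish on
-- some joint eigenvector; but it vanishes on all vectors orthogonal to the orbit of `y`.
theorem eq_zero_of_isCovarianceLimit (hU : IsMeasurableUnitaryRep U) (hΛ : IsFolner μ Λ) {y : H}
    (hy : y ∈ flightVectors U) {F : Filter ℕ} [F.NeBot] (hF : F ≤ atTop) {S : H →L[ℂ] H}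
    (hS : IsCovarianceLimit U (fun n => μ[|Λ n]) y F S) : S = 0 := by
  by_contra hS0
  obtain ⟨v, hSv, eigen⟩ := exists_joint_eigenvector_of_isCompactOperator hU.commute
    (hS.isCompactOperator hU) hS.isPositive.isSymmetric hS0 (hS.commute hU hΛ hF)
  refine hSv (ext_inner_left ℂ fun z => tendsto_nhds_unique (hS z v) ?_)
  have orthogonal : ∀ g, inner ℂ (U g y) v = 0 := fun g =>
    Submodule.inner_left_of_mem_orthogonal (hU.mem_almostPeriodicVectors eigen)
      (hU.map_mem_flightVectors g hy)
  simp [orthogonal]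

theorem tendsto_integral_norm_inner_sq (hU : IsMeasurableUnitaryRep U) (hΛ : IsFolner μ Λ) (x : H)
    {y : H} (hy : y ∈ flightVectors U) :
    Tendsto (fun n => ∫ g, ‖inner ℂ x (U g y)‖ ^ 2 ∂μ[|Λ n]) atTop (𝓝 0) := by
  refine (tendsto_iff_ultrafilter _ _ _).2 fun F hF => ?_
  obtain ⟨S, hS⟩ := hU.exists_isCovarianceLimit (fun n => μ[|Λ n]) y F
  have := (Complex.continuous_re.tendsto _).comp (hS.tendsto_integral_norm_inner_sq x)
  rw [hU.eq_zero_of_isCovarianceLimit hΛ hy hF hS] at this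
  simpa [Function.comp_def] using this

theorem tendsto_integral_inner_sub_smul_map (hU : IsMeasurableUnitaryRep U)
    (hΛ : IsFolner μ Λ) {Ω : H} (hΩ : ‖Ω‖ = 1) (fixed : Ω ∈ fixedVectors U) {R : H →L[ℂ] H} {x : H}
    (hx : x ∈ flightVectors U) {k : G}
    (measurable : Measurable fun h => inner ℂ (R (U h x)) (U k (R (U h x)))) {c : ℂ}
    (hc : Tendsto (fun n => ∫ h, inner ℂ (R (U h x)) (U k (R (U h x))) ∂μ[|Λ n]) atTop (𝓝 c)) :
    Tendsto (fun n => ∫ h, inner ℂ (R (U h x) - inner ℂ Ω (R (U h x)) • Ω)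
      (U k (R (U h x) - inner ℂ Ω (R (U h x)) • Ω)) ∂μ[|Λ n]) atTop (𝓝 c) := by
  have bound : ∀ h, ‖inner ℂ (R (U h x)) (U k (R (U h x)))‖ ≤ (‖R‖ * ‖x‖) * (‖R‖ * ‖x‖) :=
    fun h => (hU.norm_inner_le _ _ k).trans <| by
      gcongr <;> exact hU.norm_map_map_le R h x
  have integrable : ∀ n, Integrable (fun h => inner ℂ (R (U h x)) (U k (R (U h x)))) μ[|Λ n] :=
    fun n => .of_bound measurable.aestronglyMeasurable _ (.of_forall bound)
  have limit := hc.sub ((Complex.continuous_ofReal.tendsto 0).comp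
    (hU.tendsto_integral_norm_inner_sq hΛ (R.adjoint Ω) hx))
  rw [Complex.ofReal_zero, sub_zero] at limit
  refine limit.congr fun n => ?_
  have sq_integrable := (hU.memLp_norm_inner μ[|Λ n] (R.adjoint Ω) x).integrable_sq
  simp only [hU.inner_sub_smul_map hΩ fixed]
  simp only [← R.adjoint_inner_left _ Ω, Function.comp_apply, ← integral_complex_ofReal]
  exact (integral_sub (integrable n) sq_integrable.ofReal).symm

theorem tendsto_integral_norm_inner (hU : IsMeasurableUnitaryRep U) (hΛ : IsFolner μ Λ) (x : H)
    {y : H} (hy : y ∈ flightVectors U) :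
    Tendsto (fun n => ∫ g, ‖inner ℂ x (U g y)‖ ∂μ[|Λ n]) atTop (𝓝 0) := by
  have sqrt_tendsto := (Real.continuous_sqrt.tendsto _).comp
    (hU.tendsto_integral_norm_inner_sq hΛ x hy)
  rw [Real.sqrt_zero] at sqrt_tendsto
  refine squeeze_zero (fun n => integral_nonneg fun g => norm_nonneg _) (fun n => ?_) sqrt_tendsto
  exact Real.le_sqrt_of_sq_le (sq_integral_le_integral_sq (hU.memLp_norm_inner _ x y))

theorem tendsto_integral_norm_inner' (hU : IsMeasurableUnitaryRep U) (hΛ : IsFolner μ Λ) {x : H}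
    (hx : x ∈ flightVectors U) (y : H) :
    Tendsto (fun n => ∫ g, ‖inner ℂ x (U g y)‖ ∂μ[|Λ n]) atTop (𝓝 0) := by
  have : CompleteSpace (almostPeriodicVectors U) :=
    (Submodule.isClosed_topologicalClosure _).completeSpace_coe
  obtain ⟨y₁, hy₁, y₂, hy₂, rfl⟩ :=
    (almostPeriodicVectors U).exists_add_mem_mem_orthogonal y
  have orthogonal : ∀ g, inner ℂ x (U g y₁) = 0 := fun g => by
    rw [← inv_inv g, ← hU.inner_map_left]
    exact Submodule.inner_left_of_mem_orthogonal hy₁ (hU.map_mem_flightVectors _ hx)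
  simpa only [map_add, inner_add_right, orthogonal, zero_add] using
    hU.tendsto_integral_norm_inner hΛ x hy₂

theorem tendsto_integral_integral_norm_inner (hU : IsMeasurableUnitaryRep U) (hΛ : IsFolner μ Λ)
    (hΛ' : IsFolner μ fun n => (Λ n)⁻¹ * Λ n) (tempelman : IsTempelman μ Λ) {x : H}
    (hx : x ∈ flightVectors U) :
    Tendsto (fun n => ∫ h, ∫ k, ‖inner ℂ (U h x) (U k x)‖ ∂μ[|Λ n] ∂μ[|Λ n]) atTop (𝓝 0) := by
  obtain ⟨c, hc, tempelman⟩ := tempelman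
  have single := (hU.tendsto_integral_norm_inner hΛ' x hx).const_mul c
  rw [mul_zero] at single
  refine squeeze_zero_norm' ?_ single
  filter_upwards [tempelman, hΛ.measurableSet, hΛ.measure_pos_lt_top, hΛ'.measure_pos_lt_top]
    with n hn measurable pos_lt_top pos_lt_top'
  have tempelman_real : μ.real ((Λ n)⁻¹ * Λ n) ≤ c * μ.real (Λ n) := by
    have := ENNReal.toReal_mono (ENNReal.mul_ne_top ENNReal.ofReal_ne_top pos_lt_top.2.ne) hn.2
    rwa [ENNReal.toReal_mul, ENNReal.toReal_ofReal hc.le] at this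
  have integrable : IntegrableOn (fun g => ‖inner ℂ x (U g x)‖) ((Λ n)⁻¹ * Λ n) μ :=
    Measure.integrableOn_of_bounded pos_lt_top'.2.ne
      (hU.measurable_inner x x).norm.aestronglyMeasurable
      (.of_forall fun g => by rw [norm_norm]; exact hU.norm_inner_le x x g)
  refine norm_integral_le_of_ae_norm_le
    (mul_nonneg hc.le (integral_nonneg fun _ => norm_nonneg _))
    (ProbabilityTheory.ae_cond_of_forall_mem measurable fun h hh => ?_)
  rw [Real.norm_of_nonneg (integral_nonneg fun _ => norm_nonneg _)]
  simp only [hU.inner_map_map_eq]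
  exact integral_cond_mul_inv_le (fun _ => norm_nonneg _) integrable
    (ENNReal.toReal_pos pos_lt_top'.1.ne' pos_lt_top'.2.ne) tempelman_real hh

end IsMeasurableUnitaryRep

end WeakMixing

section Correlations

theorem measurable_inner_map_mul_inv {G H X : Type*} [Group G] [MeasurableSpace G]
    [MeasurableMul₂ G] [MeasurableInv G] [NormedAddCommGroup H] [InnerProductSpace ℂ H]
    {U : G → H →L[ℂ] H} [MeasurableSpace X] {v : X → H}
    (hv : Measurable fun p : X × G => inner ℂ (v p.1) (U p.2 (v p.1))) :
    Measurable fun q : X × G × G => inner ℂ (v q.1) (U (q.2.1 * q.2.2⁻¹) (v q.1)) :=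
  hv.comp (measurable_fst.prodMk (measurable_snd.fst.mul measurable_snd.snd.inv))

variable {G H : Type*} [CommGroup G] [MeasurableSpace G] [MeasurableMul₂ G] [MeasurableInv G]
  [NormedAddCommGroup H] [InnerProductSpace ℂ H] [CompleteSpace H] {U : G → H →L[ℂ] H}

namespace IsMeasurableUnitaryRep

theorem norm_weakMean_sq_eq (hU : IsMeasurableUnitaryRep U) (ν : Measure G) [IsFiniteMeasure ν]
    (v : H) : ((‖weakMean ν U v‖ ^ 2 : ℝ) : ℂ) =
      ∫ p : G × G, inner ℂ v (U (p.1 * p.2⁻¹) v) ∂ν.prod ν := by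
  have integrable : Integrable (fun p : G × G => inner ℂ v (U (p.1 * p.2⁻¹) v)) (ν.prod ν) :=
    .of_bound ((hU.measurable_inner v v).comp
      (measurable_fst.mul measurable_snd.inv)).aestronglyMeasurable (‖v‖ * ‖v‖)
      (.of_forall fun p => hU.norm_inner_le v v _)
  rw [integral_prod _ integrable]
  simp only [← hU.inner_map_map_eq]
  rw [← hU.isBoundedWeaklyMeasurable.inner_weakMean_weakMean, inner_self_eq_norm_sq_to_K]
  norm_cast

theorem integral_norm_inner_le_sqrt (hU : IsMeasurableUnitaryRep U) (ν : Measure G)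
    [IsFiniteMeasure ν] {z : H} (hz : ‖z‖ = 1) (w : H) :
    ∫ h, ‖inner ℂ z (U h w)‖ ∂ν ≤ √(∫ h, ∫ k, ‖inner ℂ (U h w) (U k w)‖ ∂ν ∂ν) := by
  have measurable_joint : Measurable fun p : G × G => inner ℂ (U p.1 w) (U p.2 w) := by
    simp only [hU.inner_map_map_eq]
    exact (hU.measurable_inner w w).comp (measurable_snd.mul measurable_fst.inv)
  refine Real.le_sqrt_of_sq_le ?_
  simpa only [hz, one_pow, one_mul, norm_inner_symm (𝕜 := ℂ)] using
    hU.isBoundedWeaklyMeasurable.sq_integral_norm_inner_le ν z w measurable_joint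

variable {X : Type*} [MeasurableSpace X] {v : X → H}

theorem measurable_norm_weakMean (hU : IsMeasurableUnitaryRep U) (ν : Measure G) [IsFiniteMeasure ν]
    (hv : Measurable fun p : X × G => inner ℂ (v p.1) (U p.2 (v p.1))) :
    Measurable fun x => ‖weakMean ν U (v x)‖ := by
  have sq_measurable : Measurable fun x => ((‖weakMean ν U (v x)‖ ^ 2 : ℝ) : ℂ) := by
    simp only [hU.norm_weakMean_sq_eq]
    exact ((measurable_inner_map_mul_inv hv).stronglyMeasurable.integral_prod_right'
      (ν := ν.prod ν)).measurable
  simpa only [RCLike.re_eq_complex_re, Complex.ofReal_re, Real.sqrt_sq (norm_nonneg _)] using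
    sq_measurable.re.sqrt

theorem memLp_norm_weakMean (hU : IsMeasurableUnitaryRep U) (ν : Measure G)
    [IsZeroOrProbabilityMeasure ν]
    (hv : Measurable fun p : X × G => inner ℂ (v p.1) (U p.2 (v p.1))) {D : ℝ}
    (hD : ∀ x, ‖v x‖ ≤ D) (ρ : Measure X) [IsFiniteMeasure ρ] (p : ENNReal) :
    MemLp (fun x => ‖weakMean ν U (v x)‖) p ρ :=
  .of_bound (hU.measurable_norm_weakMean ν hv).aestronglyMeasurable D
    (.of_forall fun x => by rw [norm_norm]; exact (hU.norm_weakMean_le ν (v x)).trans (hD x))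

variable {ρ : ℕ → Measure X} [∀ n, IsZeroOrProbabilityMeasure (ρ n)]

theorem tendsto_integral_norm_weakMean_sq (hU : IsMeasurableUnitaryRep U) (ν : Measure G)
    [IsZeroOrProbabilityMeasure ν]
    (hv : Measurable fun p : X × G => inner ℂ (v p.1) (U p.2 (v p.1))) {D : ℝ}
    (hD : ∀ x, ‖v x‖ ≤ D) {ψ : G → ℂ}
    (hψ : ∀ k, Tendsto (fun n => ∫ x, inner ℂ (v x) (U k (v x)) ∂ρ n) atTop (𝓝 (ψ k))) :
    Tendsto (fun n => ((∫ x, ‖weakMean ν U (v x)‖ ^ 2 ∂ρ n : ℝ) : ℂ)) atTop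
      (𝓝 (∫ p : G × G, ψ (p.1 * p.2⁻¹) ∂ν.prod ν)) := by
  have bound : ∀ x k, ‖inner ℂ (v x) (U k (v x))‖ ≤ D * D := fun x k =>
    (hU.norm_inner_le _ _ k).trans
      (mul_le_mul (hD x) (hD x) (norm_nonneg _) ((norm_nonneg _).trans (hD x)))
  have measurable := measurable_inner_map_mul_inv hv
  have fubini : ∀ n, ((∫ x, ‖weakMean ν U (v x)‖ ^ 2 ∂ρ n : ℝ) : ℂ) =
      ∫ p : G × G, ∫ x, inner ℂ (v x) (U (p.1 * p.2⁻¹) (v x)) ∂ρ n ∂ν.prod ν := fun n => by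
    rw [← integral_complex_ofReal]
    simp only [hU.norm_weakMean_sq_eq]
    exact integral_integral_swap <| .of_bound measurable.aestronglyMeasurable (D * D)
      (.of_forall fun q => bound q.1 _)
  simp only [fubini]
  refine tendsto_integral_of_dominated_convergence (fun _ => D * D) (fun n => ?_)
    (integrable_const _) (fun n => .of_forall fun p => ?_) (.of_forall fun p => hψ _)
  · exact (measurable.comp
      measurable_swap).stronglyMeasurable.integral_prod_right'.aestronglyMeasurable
  · exact norm_integral_le_of_ae_norm_le (mul_self_nonneg D) (.of_forall fun x => bound x _)

theorem eventually_integral_norm_weakMean_lt (hU : IsMeasurableUnitaryRep U) (ν : Measure G)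
    [IsZeroOrProbabilityMeasure ν]
    (hv : Measurable fun p : X × G => inner ℂ (v p.1) (U p.2 (v p.1))) {D : ℝ}
    (hD : ∀ x, ‖v x‖ ≤ D) {ψ : G → ℂ}
    (hψ : ∀ k, Tendsto (fun n => ∫ x, inner ℂ (v x) (U k (v x)) ∂ρ n) atTop (𝓝 (ψ k)))
    {y : H} {C : ℝ} (hC : ∀ k, ‖ψ k‖ ≤ C * ‖inner ℂ y (U k y)‖) {ε : ℝ} (hε : 0 ≤ ε)
    (small : C * ∫ h, ∫ k, ‖inner ℂ (U h y) (U k y)‖ ∂ν ∂ν < ε ^ 2) :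
    ∀ᶠ n in atTop, ∫ x, ‖weakMean ν U (v x)‖ ∂ρ n < ε := by
  have integrable : Integrable (fun p : G × G => ‖inner ℂ y (U (p.1 * p.2⁻¹) y)‖) (ν.prod ν) :=
    .of_bound ((hU.measurable_inner y y).comp
      (measurable_fst.mul measurable_snd.inv)).norm.aestronglyMeasurable (‖y‖ * ‖y‖)
      (.of_forall fun p => by rw [norm_norm]; exact hU.norm_inner_le y y _)
  have limit_small : ‖∫ p : G × G, ψ (p.1 * p.2⁻¹) ∂ν.prod ν‖ < ε ^ 2 := by
    refine (norm_integral_le_of_norm_le (integrable.const_mul C)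
      (.of_forall fun p => hC _)).trans_lt ?_
    rw [integral_const_mul, integral_prod _ integrable]
    simp only [← hU.inner_map_map_eq]
    simpa only [norm_inner_symm (𝕜 := ℂ)] using! small
  filter_upwards [(hU.tendsto_integral_norm_weakMean_sq ν hv hD hψ).norm.eventually_lt_const
    limit_small] with n hn
  rw [Complex.norm_of_nonneg (integral_nonneg fun _ => sq_nonneg _)] at hn
  exact lt_of_pow_lt_pow_left₀ 2 hε
    ((sq_integral_le_integral_sq (hU.memLp_norm_weakMean ν hv hD (ρ n) 2)).trans_lt hn)

variable {μ : Measure G} [μ.IsMulRightInvariant] {Λ : ℕ → Set G}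

-- A form of van der Corput's lemma. By uniformity, the mean over `Λ n` may be replaced by the mean
-- over a fixed `Λ m`, after which the limit in `n` only involves the limiting correlations `ψ`.
theorem tendsto_integral_norm_weakMean (hU : IsMeasurableUnitaryRep U)
    (hΛ : IsUniformFolner μ Λ) (hΛ' : IsFolner μ fun n => (Λ n)⁻¹ * Λ n)
    (tempelman : IsTempelman μ Λ)
    (hv : Measurable fun p : X × G => inner ℂ (v p.1) (U p.2 (v p.1))) {D : ℝ}
    (hD : ∀ x, ‖v x‖ ≤ D) {ψ : G → ℂ}
    (hψ : ∀ k, Tendsto (fun n => ∫ x, inner ℂ (v x) (U k (v x)) ∂ρ n) atTop (𝓝 (ψ k)))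
    {y : H} (hy : y ∈ flightVectors U) {C : ℝ} (hC : ∀ k, ‖ψ k‖ ≤ C * ‖inner ℂ y (U k y)‖) :
    Tendsto (fun n => ∫ x, ‖weakMean μ[|Λ n] U (v x)‖ ∂ρ n) atTop (𝓝 0) := by
  refine (tendsto_order.2 ⟨fun a ha => .of_forall fun n => ha.trans_le
    (integral_nonneg fun _ => norm_nonneg _), fun ε hε => ?_⟩)
  set δ := ε / (2 * (|D| + 1))
  have hδ : 0 < δ := by positivity
  have mixing :=
    (hU.tendsto_integral_integral_norm_inner hΛ.toIsFolner hΛ' tempelman hy).const_mul C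
  rw [mul_zero] at mixing
  obtain ⟨m, small, hm, hm', uniform⟩ := ((mixing.eventually_lt_const (u := (ε / 2) ^ 2)
    (by positivity)).and (hΛ.measurableSet.and (hΛ.measure_pos_lt_top.and hΛ.symmDiff_le))).exists
  filter_upwards [
    hU.eventually_integral_norm_weakMean_lt μ[|Λ m] hv hD hψ hC (half_pos hε).le small,
    hΛ.measurableSet, hΛ.measure_pos_lt_top, uniform δ hδ] with n hlt hn hn' hδn
  have pos : 0 < μ.real (Λ n) := ENNReal.toReal_pos hn'.1.ne' hn'.2.ne
  have pointwise : ∀ x, ‖weakMean μ[|Λ n] U (v x)‖ ≤ ‖weakMean μ[|Λ m] U (v x)‖ + ε / 2 := fun x =>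
    calc ‖weakMean μ[|Λ n] U (v x)‖ ≤ ‖weakMean μ[|Λ m] U (v x)‖ + δ * ‖v x‖ :=
          hU.norm_weakMean_cond_le_add hn hn'.2.ne hm hm'.1.ne' hm'.2.ne
            (fun g hg => (div_le_iff₀ pos).2 (hδn g hg)) (v x)
      _ ≤ ‖weakMean μ[|Λ m] U (v x)‖ + δ * (|D| + 1) := by
          gcongr; linarith [hD x, le_abs_self D]
      _ = ‖weakMean μ[|Λ m] U (v x)‖ + ε / 2 := by simp only [δ]; field_simp
  have integrable : ∀ i, Integrable (fun x => ‖weakMean μ[|Λ i] U (v x)‖) (ρ n) := fun i =>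
    memLp_one_iff_integrable.1 (hU.memLp_norm_weakMean μ[|Λ i] hv hD (ρ n) 1)
  calc ∫ x, ‖weakMean μ[|Λ n] U (v x)‖ ∂ρ n
      ≤ ∫ x, (‖weakMean μ[|Λ m] U (v x)‖ + ε / 2) ∂ρ n :=
        integral_mono (integrable n) ((integrable m).add (integrable_const _)) pointwise
    _ ≤ ∫ x, ‖weakMean μ[|Λ m] U (v x)‖ ∂ρ n + ε / 2 := by
        rw [integral_add (integrable m) (integrable_const _), integral_const, smul_eq_mul]
        gcongr
        exact mul_le_of_le_one_left (half_pos hε).le measureReal_le_one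
    _ < ε / 2 + ε / 2 := by gcongr
    _ = ε := add_halves ε

-- The averages are uniformly bounded seminorms in `x`, so it suffices to treat eigenvectors, by
-- the mean ergodic theorem, and flight vectors, by van der Corput's lemma.
theorem tendsto_integral_norm_weakMean_map (hU : IsMeasurableUnitaryRep U)
    (hΛ : IsUniformFolner μ Λ) (hΛ' : IsFolner μ fun n => (Λ n)⁻¹ * Λ n)
    (tempelman : IsTempelman μ Λ) {T : H →L[ℂ] H} (hT : ∀ x, T x ∈ (fixedVectors U)ᗮ)
    (measurable_joint : ∀ x, Measurable fun p : G × G =>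
      inner ℂ (T (U p.1 x)) (U p.2 (T (U p.1 x))))
    {ρ : ℕ → Measure G} [∀ n, IsZeroOrProbabilityMeasure (ρ n)]
    (correlations : ∀ x ∈ flightVectors U, ∃ ψ : G → ℂ, ∃ C : ℝ,
      (∀ k, Tendsto (fun n => ∫ h, inner ℂ (T (U h x)) (U k (T (U h x))) ∂ρ n) atTop (𝓝 (ψ k))) ∧
        ∀ k, ‖ψ k‖ ≤ C * ‖inner ℂ x (U k x)‖) (x : H) :
    Tendsto (fun n => ∫ h, ‖weakMean μ[|Λ n] U (T (U h x))‖ ∂ρ n) atTop (𝓝 0) := by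
  have integrable : ∀ n x, Integrable (fun h => ‖weakMean μ[|Λ n] U (T (U h x))‖) (ρ n) :=
    fun n x => memLp_one_iff_integrable.1
      (hU.memLp_norm_weakMean _ (measurable_joint x) (hU.norm_map_map_le T · x) (ρ n) 1)
  let p : ℕ → Seminorm ℂ H := fun n =>
    .of (fun x => ∫ h, ‖weakMean μ[|Λ n] U (T (U h x))‖ ∂ρ n)
      (fun x y => by
        rw [← integral_add (integrable n x) (integrable n y)]
        refine integral_mono (integrable n _) ((integrable n x).add (integrable n y)) fun h => ?_
        simpa only [map_add] using norm_add_le _ _)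
      (fun c x => by simp only [map_smul, norm_smul, integral_const_mul])
  have closed : IsClosed (vanishingSubmodule p : Set H) :=
    isClosed_vanishingSubmodule (C := ‖T‖) fun n x =>
      (Real.le_norm_self _).trans <| norm_integral_le_of_ae_norm_le (by positivity) <|
        .of_forall fun h => by
          rw [norm_norm]; exact (hU.norm_weakMean_le _ _).trans (hU.norm_map_map_le T h x)
  have almostPeriodic_le : almostPeriodicVectors U ≤ vanishingSubmodule p :=
    Submodule.topologicalClosure_minimal _ (Submodule.span_le.2 fun _ hx =>
      hU.tendsto_integral_norm_weakMean_of_eigenvector hΛ.toIsFolner hT hx.2.choose_spec) closed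
  have flight_le : flightVectors U ≤ vanishingSubmodule p := fun x hx => by
    obtain ⟨ψ, C, hψ, hC⟩ := correlations x hx
    exact hU.tendsto_integral_norm_weakMean hΛ hΛ' tempelman (measurable_joint x)
      (hU.norm_map_map_le T · x) hψ hx hC
  have : CompleteSpace (almostPeriodicVectors U) :=
    (Submodule.isClosed_topologicalClosure _).completeSpace_coe
  obtain ⟨y, hy, z, hz, rfl⟩ := (almostPeriodicVectors U).exists_add_mem_mem_orthogonal x
  exact add_mem (almostPeriodic_le hy) (flight_le hz)

theorem integrable_norm_weakMean_map_sub (hU : IsMeasurableUnitaryRep U) {Ω : H} (hΩ : ‖Ω‖ = 1)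
    (fixed : Ω ∈ fixedVectors U) {R : H →L[ℂ] H} {x : H} (measurable_joint : Measurable
      fun p : G × G => inner ℂ (R (U p.1 x)) (U p.2 (R (U p.1 x)))) (ν ρ : Measure G)
    [IsZeroOrProbabilityMeasure ν] [IsFiniteMeasure ρ] :
    Integrable (fun h => ‖weakMean ν U (R (U h x) - inner ℂ Ω (R (U h x)) • Ω)‖) ρ := by
  refine memLp_one_iff_integrable.1 (hU.memLp_norm_weakMean ν
    (hU.measurable_inner_map_sub hΩ fixed measurable_joint)
    (fun h => hU.norm_map_map_le (R - InnerProductSpace.rankOne ℂ Ω Ω ∘L R) h x) ρ 1)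

theorem tendsto_integral_norm_weakMean_map_sub (hU : IsMeasurableUnitaryRep U)
    (hΛ : IsUniformFolner μ Λ) (hΛ' : IsFolner μ fun n => (Λ n)⁻¹ * Λ n)
    (tempelman : IsTempelman μ Λ) {Λ₁ : ℕ → Set G} (hΛ₁ : IsFolner μ Λ₁) {Ω : H} (hΩ : ‖Ω‖ = 1)
    (fixed : Ω ∈ fixedVectors U) (ergodic : fixedVectors U ≤ ℂ ∙ Ω) {R : H →L[ℂ] H}
    (measurable_joint : ∀ x, Measurable fun p : G × G =>
      inner ℂ (R (U p.1 x)) (U p.2 (R (U p.1 x))))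
    (correlations : ∀ x ∈ flightVectors U, ∃ ψ : G → ℂ, ∃ C : ℝ,
      (∀ k, Tendsto (fun n => ∫ h, inner ℂ (R (U h x)) (U k (R (U h x))) ∂μ[|Λ₁ n]) atTop
        (𝓝 (ψ k))) ∧ ∀ k, ‖ψ k‖ ≤ C * ‖inner ℂ x (U k x)‖) (x : H) :
    Tendsto (fun n => ∫ h, ‖weakMean μ[|Λ n] U (R (U h x) - inner ℂ Ω (R (U h x)) • Ω)‖ ∂μ[|Λ₁ n])
      atTop (𝓝 0) := by
  let T : H →L[ℂ] H := R - InnerProductSpace.rankOne ℂ Ω Ω ∘L R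
  have T_apply : ∀ y, T y = R y - inner ℂ Ω (R y) • Ω := fun y => rfl
  have hT : ∀ y, T y ∈ (fixedVectors U)ᗮ := fun y =>
    T_apply y ▸ sub_inner_smul_mem_orthogonal hΩ ergodic (R y)
  simp only [← T_apply]
  refine hU.tendsto_integral_norm_weakMean_map hΛ hΛ' tempelman hT (fun y => ?_) (fun y hy => ?_) x
  · exact hU.measurable_inner_map_sub hΩ fixed (measurable_joint y)
  · obtain ⟨ψ, C, hψ, hC⟩ := correlations y hy
    refine ⟨ψ, C, fun k => ?_, hC⟩
    simp only [T_apply]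
    exact hU.tendsto_integral_inner_sub_smul_map hΛ₁ hΩ fixed hy
      ((measurable_joint y).comp measurable_prodMk_right) (hψ k)

-- The vector `R (U h x)` is replaced by its component along `Ω`, the average over `Λ₂` of the rest
-- being negligible.
theorem tendsto_integral_integral_map (hU : IsMeasurableUnitaryRep U)
    {Λ₁ Λ₂ : ℕ → Set G} (hΛ₁ : IsFolner μ Λ₁) (hΛ₂ : IsUniformFolner μ Λ₂)
    (hΛ₂' : IsFolner μ fun n => (Λ₂ n)⁻¹ * Λ₂ n) (tempelman : IsTempelman μ Λ₂) {Ω : H}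
    (hΩ : ‖Ω‖ = 1) (fixed : Ω ∈ fixedVectors U) (ergodic : fixedVectors U ≤ ℂ ∙ Ω) {R : H →L[ℂ] H}
    (measurable_joint : ∀ x, Measurable fun p : G × G =>
      inner ℂ (R (U p.1 x)) (U p.2 (R (U p.1 x))))
    (correlations : ∀ x ∈ flightVectors U, ∃ ψ : G → ℂ, ∃ C : ℝ,
      (∀ k, Tendsto (fun n => ∫ h, inner ℂ (R (U h x)) (U k (R (U h x))) ∂μ[|Λ₁ n]) atTop
        (𝓝 (ψ k))) ∧ ∀ k, ‖ψ k‖ ≤ C * ‖inner ℂ x (U k x)‖)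
    {L : G → H →L[ℂ] H} {C : ℝ} (hL : ∀ h, ‖L h‖ ≤ C) {x y : H} (hLΩ : ∀ h, L h Ω = U h y)
    {β : ℕ → ℝ} (hβ : Tendsto β atTop (𝓝 0)) (le_β : ∀ n z, ‖z‖ = 1 →
      ∫ h, ‖inner ℂ Ω (R (U h x))‖ * ‖inner ℂ z (U h y)‖ ∂μ[|Λ₁ n] ≤ β n) :
    Tendsto (fun n => ∫ h, ∫ g, L h (U g (R (U h x))) ∂μ[|Λ₂ n] ∂μ[|Λ₁ n]) atTop (𝓝 0) := by
  let r : ℕ → G → ℝ := fun n h => ‖weakMean μ[|Λ₂ n] U (R (U h x) - inner ℂ Ω (R (U h x)) • Ω)‖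
  have r_tendsto : Tendsto (fun n => ∫ h, r n h ∂μ[|Λ₁ n]) atTop (𝓝 0) :=
    hU.tendsto_integral_norm_weakMean_map_sub hΛ₂ hΛ₂' tempelman hΛ₁ hΩ fixed ergodic
      measurable_joint correlations x
  have integrable_r : ∀ n, Integrable (r n) μ[|Λ₁ n] := fun n =>
    hU.integrable_norm_weakMean_map_sub hΩ fixed (measurable_joint x) _ _
  have integrable_main : ∀ n z, Integrable
      (fun h => ‖inner ℂ Ω (R (U h x))‖ * ‖inner ℂ z (U h y)‖) μ[|Λ₁ n] := fun n z => by
    simp only [← R.adjoint_inner_left _ Ω]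
    exact (hU.memLp_norm_inner _ _ x).integrable_mul (hU.memLp_norm_inner _ z y)
  have limit := hβ.add (r_tendsto.const_mul C)
  rw [mul_zero, add_zero] at limit
  refine squeeze_zero_norm' ?_ limit
  filter_upwards [hΛ₂.measure_pos_lt_top] with n hn
  have := ProbabilityTheory.cond_isProbabilityMeasure_of_finite hn.1.ne' hn.2.ne
  have hC : 0 ≤ C := (norm_nonneg _).trans (hL 1)
  have hβn : 0 ≤ β n := (integral_nonneg fun h => by positivity).trans (le_β n Ω hΩ)
  refine norm_integral_le_of_forall_norm_inner_le (φ := fun z h =>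
    ‖inner ℂ Ω (R (U h x))‖ * ‖inner ℂ z (U h y)‖ + ‖z‖ * C * r n h)
    (fun z => (integrable_main n z).add ((integrable_r n).const_mul _)) (fun z h => ?_)
    (add_nonneg hβn (mul_nonneg hC (integral_nonneg fun _ => norm_nonneg _))) fun z hz => ?_
  · refine (hU.norm_inner_integral_map_le μ[|Λ₂ n] fixed (L h) z (R (U h x))).trans ?_
    rw [hLΩ]
    gcongr
    exact hL h
  · rw [integral_add (integrable_main n z) ((integrable_r n).const_mul _), integral_const_mul, hz,
      one_mul]
    gcongr
    exact le_β n z hz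

end IsMeasurableUnitaryRep

end Correlations

section CorrelationOperators

variable {G H : Type*} [NormedAddCommGroup H] [InnerProductSpace ℂ H] [CompleteSpace H]

/-- The operator with matrix coefficients `⟪R (U h x), U k (R (U h y))⟫`. -/
noncomputable def correlation (U : G → H →L[ℂ] H) (R : H →L[ℂ] H) (h k : G) : H →L[ℂ] H :=
  (R ∘L U h).adjoint ∘L U k ∘L R ∘L U h

variable {U : G → H →L[ℂ] H} {R : H →L[ℂ] H}

theorem inner_correlation (h k : G) (x y : H) :
    inner ℂ x (correlation U R h k y) = inner ℂ (R (U h x)) (U k (R (U h y))) :=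
  (R ∘L U h).adjoint_inner_right x _

variable [MeasurableSpace G]

theorem measurable_inner_correlation {ι : Type*} {j : ι → H} (hj : DenseRange j)
    (hR : ∀ a b, Measurable fun p : G × G =>
      inner ℂ (R (U p.1 (j a))) (U p.2 (R (U p.1 (j b))))) (x y : H) :
    Measurable fun p : G × G => inner ℂ x (correlation U R p.1 p.2 y) :=
  measurable_inner_of_denseRange hj
    (fun a b => by simpa only [inner_correlation] using hR a b) x y

namespace IsMeasurableUnitaryRep

variable [Group G]

theorem norm_correlation_le (hU : IsMeasurableUnitaryRep U) (R : H →L[ℂ] H) (h k : G) :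
    ‖correlation U R h k‖ ≤ ‖R‖ * ‖R‖ := by
  have norm_comp : ‖R ∘L U h‖ ≤ ‖R‖ :=
    ContinuousLinearMap.opNorm_le_bound _ (norm_nonneg R) (hU.norm_map_map_le R h)
  refine (ContinuousLinearMap.opNorm_comp_le _ _).trans ?_
  rw [LinearIsometryEquiv.norm_map]
  gcongr
  exact ContinuousLinearMap.opNorm_le_bound _ (norm_nonneg R) fun x => by
    simpa only [ContinuousLinearMap.comp_apply, hU.norm_map] using hU.norm_map_map_le R h x

theorem tendsto_integral_inner_correlation (hU : IsMeasurableUnitaryRep U) {ι : Type*} {j : ι → H}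
    (hj : DenseRange j) {ν : ℕ → Measure G} [∀ n, IsZeroOrProbabilityMeasure (ν n)] {k : G}
    (measurable : ∀ x y, Measurable fun h => inner ℂ x (correlation U R h k y)) {S : H →L[ℂ] H}
    (hS : ∀ a b, Tendsto (fun n => ∫ h, inner ℂ (R (U h (j a))) (U k (R (U h (j b)))) ∂ν n) atTop
      (𝓝 (inner ℂ (j a) (S (j b))))) (x y : H) :
    Tendsto (fun n => ∫ h, inner ℂ (R (U h x)) (U k (R (U h y))) ∂ν n) atTop
      (𝓝 (inner ℂ x (S y))) := by
  have bounded : IsBoundedWeaklyMeasurable (correlation U R · k) :=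
    ⟨measurable, _, fun h => hU.norm_correlation_le R h k⟩
  have limit := tendsto_inner_clm_apply_of_denseRange hj (S := S)
    (T := fun n => weakMean (ν n) (correlation U R · k)) (C := ‖R‖ * ‖R‖)
    (fun n => ContinuousLinearMap.opNorm_le_bound _ (by positivity) fun w =>
      bounded.norm_weakMean_apply_le (by positivity) <| .of_forall fun h =>
        (correlation U R h k).le_of_opNorm_le (hU.norm_correlation_le R h k) w)
    (fun a b => by simpa only [bounded.inner_weakMean, inner_correlation] using hS a b) x y
  simpa only [bounded.inner_weakMean, inner_correlation] using limit

end IsMeasurableUnitaryRep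

end CorrelationOperators

section GNS

/-- The operator on a GNS space induced by right multiplication by `b`, provided that this is
bounded. -/
noncomputable def rightMul {A H : Type*} [Ring A] [Algebra ℂ A] [NormedAddCommGroup H]
    [InnerProductSpace ℂ H] [CompleteSpace H] (j : A →ₗ[ℂ] H) (b : A) : H →L[ℂ] H :=
  (j ∘ₗ LinearMap.mulRight ℂ b).extendOfNorm j

variable {A G H : Type*} [CStarAlgebra A] [CommGroup G] [MeasurableSpace G]
  [NormedAddCommGroup H] [InnerProductSpace ℂ H]

/-- A C⋆-dynamical system `(A, ω, τ, G)` with tracial `ω`, together with a GNS representation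
`(H, j)` of `(A, ω)` and the operators `U g` implementing `τ g` on `H`. Positivity of `ω` is
expressed by `inner_eq`. -/
structure IsGNSSystem (ω : A →ₗ[ℂ] ℂ) (τ : G → A ≃⋆ₐ[ℂ] A) (j : A →ₗ[ℂ] H)
    (U : G → H →L[ℂ] H) : Prop where
  state_one : ω 1 = 1
  trace_comm : ∀ a b, ω (a * b) = ω (b * a)
  action_one : ∀ a, τ 1 a = a
  action_mul : ∀ g h a, τ g (τ h a) = τ (g * h) a
  invariant : ∀ g a, ω (τ g a) = ω a
  measurable : ∀ a b, Measurable fun g => ω (a * τ g b)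
  denseRange : DenseRange j
  inner_eq : ∀ a b, inner ℂ (j a) (j b) = ω (star a * b)
  apply_eq : ∀ g a, U g (j a) = j (τ g a)

namespace IsGNSSystem

variable {ω : A →ₗ[ℂ] ℂ} {τ : G → A ≃⋆ₐ[ℂ] A} {j : A →ₗ[ℂ] H} {U : G → H →L[ℂ] H}

theorem norm_sq_eq (S : IsGNSSystem ω τ j U) (a : A) : ‖j a‖ ^ 2 = (ω (star a * a)).re := by
  rw [← S.inner_eq, ← inner_self_eq_norm_sq (𝕜 := ℂ), RCLike.re_eq_complex_re]

theorem norm_apply_one (S : IsGNSSystem ω τ j U) : ‖j 1‖ = 1 := by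
  rw [← sq_eq_sq₀ (norm_nonneg _) zero_le_one, S.norm_sq_eq, star_one, one_mul, S.state_one,
    one_pow, Complex.one_re]

theorem inner_one_left (S : IsGNSSystem ω τ j U) (a : A) : inner ℂ (j 1) (j a) = ω a := by
  rw [S.inner_eq, star_one, one_mul]

theorem inner_star_star (S : IsGNSSystem ω τ j U) (a b : A) :
    inner ℂ (j (star a)) (j (star b)) = inner ℂ (j b) (j a) := by
  rw [S.inner_eq, S.inner_eq, star_star, S.trace_comm]

theorem norm_apply_mul_le (S : IsGNSSystem ω τ j U) (a b : A) :
    ‖j (a * b)‖ ≤ ‖b‖ * ‖j a‖ := by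
  let : PartialOrder A := CStarAlgebra.spectralOrder A
  have : StarOrderedRing A := CStarAlgebra.spectralOrderedRing A
  have le_smul : a * (b * star b) * star a ≤ (‖b‖ ^ 2) • (a * star a) := by
    rw [sq, ← CStarRing.norm_self_mul_star]
    exact CStarAlgebra.star_right_conjugate_le_norm_smul (IsSelfAdjoint.mul_star_self b)
  obtain ⟨y, hy⟩ := CStarAlgebra.nonneg_iff_eq_star_mul_self.1 (sub_nonneg.2 le_smul)
  have nonneg : 0 ≤ ‖b‖ ^ 2 * (ω (a * star a)).re - (ω (a * (b * star b) * star a)).re := by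
    rw [← Complex.re_ofReal_mul, ← Complex.sub_re, ← smul_eq_mul, ← map_smul, ← map_sub,
      Complex.coe_smul, hy, ← S.norm_sq_eq]
    positivity
  refine le_of_sq_le_sq ?_ (by positivity)
  rw [mul_pow, S.norm_sq_eq, S.norm_sq_eq, S.trace_comm, S.trace_comm (star a), star_mul,
    ← mul_assoc, mul_assoc a]
  exact sub_nonneg.1 nonneg

theorem inner_map_map (S : IsGNSSystem ω τ j U) (g : G) (x y : H) :
    inner ℂ (U g x) (U g y) = inner ℂ x y := by
  refine S.denseRange.induction_on₂ (p := fun x y => inner ℂ (U g x) (U g y) = inner ℂ x y)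
    (isClosed_eq (by fun_prop) (by fun_prop)) (fun a b => ?_) x y
  rw [S.apply_eq, S.apply_eq, S.inner_eq, S.inner_eq, ← map_star, ← map_mul, S.invariant]

theorem isMeasurableUnitaryRep (S : IsGNSSystem ω τ j U) : IsMeasurableUnitaryRep U where
  map_one := ContinuousLinearMap.coe_inj.1 <| LinearMap.coe_injective <|
    S.denseRange.equalizer (U 1).continuous continuous_id <| funext fun a => by
      simp [S.apply_eq, S.action_one]
  map_mul g h := ContinuousLinearMap.coe_inj.1 <| LinearMap.coe_injective <|
    S.denseRange.equalizer (U (g * h)).continuous (U g * U h).continuous <| funext fun a => by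
      simp [S.apply_eq, S.action_mul]
  inner_map_map := S.inner_map_map
  measurable_inner := measurable_inner_of_denseRange S.denseRange fun a b => by
    simpa only [S.apply_eq, S.inner_eq] using S.measurable (star a) b

theorem one_mem_fixedVectors (S : IsGNSSystem ω τ j U) : j 1 ∈ fixedVectors U := fun g => by
  rw [S.apply_eq, map_one]

theorem norm_inner_apply_star (S : IsGNSSystem ω τ j U) (g : G) (a b : A) :
    ‖inner ℂ (j (star b)) (U g (j (star a)))‖ = ‖inner ℂ (j b) (U g (j a))‖ := by
  rw [S.apply_eq, S.apply_eq, map_star (τ g), S.inner_star_star, norm_inner_symm]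

variable [CompleteSpace H]

theorem rightMul_apply (S : IsGNSSystem ω τ j U) (b a : A) : rightMul j b (j a) = j (a * b) :=
  LinearMap.extendOfNorm_eq S.denseRange ⟨‖b‖, fun a => S.norm_apply_mul_le a b⟩ a

theorem norm_rightMul_le (S : IsGNSSystem ω τ j U) (b : A) : ‖rightMul j b‖ ≤ ‖b‖ :=
  ContinuousLinearMap.opNorm_le_bound _ (norm_nonneg b) fun x =>
    LinearMap.norm_extendOfNorm_apply_le S.denseRange _ (fun a => S.norm_apply_mul_le a b) x

theorem fixedVectors_le_span (S : IsGNSSystem ω τ j U) {μ : Measure G} {Λ : ℕ → Set G}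
    (pos_lt_top : ∀ᶠ n in atTop, 0 < μ (Λ n) ∧ μ (Λ n) < ⊤)
    (ergodic : ∀ a b, Tendsto (fun n => ∫ g, ω (a * τ g b) ∂μ[|Λ n]) atTop (𝓝 (ω a * ω b))) :
    fixedVectors U ≤ ℂ ∙ j 1 := fun v hv => by
  have hU := S.isMeasurableUnitaryRep
  have limit := tendsto_inner_clm_apply_of_denseRange S.denseRange (C := 1)
    (T := fun n => weakMean μ[|Λ n] U) (S := InnerProductSpace.rankOne ℂ (j 1) (j 1))
    (fun n => ContinuousLinearMap.opNorm_le_bound _ zero_le_one fun x => by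
      simpa only [one_mul] using hU.norm_weakMean_le μ[|Λ n] x)
    (fun a b => by
      simpa only [hU.isBoundedWeaklyMeasurable.inner_weakMean, S.apply_eq, S.inner_eq,
        InnerProductSpace.rankOne_apply, inner_smul_right, star_one, one_mul, mul_one,
        mul_comm (ω b)] using ergodic (star a) b)
  refine Submodule.mem_span_singleton.2 ⟨inner ℂ (j 1) v, ext_inner_left ℂ fun x => ?_⟩
  refine tendsto_nhds_unique (limit x v) (tendsto_const_nhds.congr' ?_)
  filter_upwards [pos_lt_top] with n hn
  have := ProbabilityTheory.cond_isProbabilityMeasure_of_finite hn.1.ne' hn.2.ne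
  rw [hU.weakMean_eq_self _ hv]

theorem inner_rightMul_map (S : IsGNSSystem ω τ j U) (h k : G) (a a' b : A) :
    inner ℂ (rightMul j b (U h (j a))) (U k (rightMul j b (U h (j a')))) =
      ω (τ h (star a) * τ (k * h) a' * τ k b * star b) := by
  rw [S.apply_eq, S.apply_eq, S.rightMul_apply, S.rightMul_apply, S.apply_eq, S.inner_eq, star_mul,
    map_mul (τ k), S.action_mul, mul_assoc (star b), S.trace_comm (star b), map_star,
    ← mul_assoc (star (τ h a))]

theorem inner_one_rightMul_map (S : IsGNSSystem ω τ j U) (h : G) (a b : A) :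
    inner ℂ (j 1) (rightMul j b (U h (j a))) = inner ℂ (j (star b)) (U h (j a)) := by
  rw [S.apply_eq, S.rightMul_apply, S.inner_one_left, S.inner_eq, star_star, S.trace_comm]

theorem norm_rightMul_map_le (S : IsGNSSystem ω τ j U) (h : G) (c : A) :
    ‖rightMul j (τ h c)‖ ≤ ‖c‖ :=
  (S.norm_rightMul_le _).trans_eq (NonUnitalStarAlgHom.norm_map (τ h) (τ h).injective c)

theorem measurable_inner_correlation (S : IsGNSSystem ω τ j U) (measurable_four : ∀ a₁ a₂ a₃ a₄ : A,
      Measurable fun p : G × G => ω (τ p.1 a₁ * τ (p.2 * p.1) a₂ * τ p.2 a₃ * a₄)) (b : A)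
    (x y : H) : Measurable fun p : G × G => inner ℂ x (correlation U (rightMul j b) p.1 p.2 y) :=
  _root_.measurable_inner_correlation S.denseRange (fun a a' => by
    simpa only [S.inner_rightMul_map] using measurable_four (star a) a' b (star b)) x y

variable [MeasurableMul₂ G] {μ : Measure G} [μ.IsMulRightInvariant] {Λ : ℕ → Set G}

theorem tendsto_integral_inner_rightMul_map (S : IsGNSSystem ω τ j U) (hΛ : IsFolner μ Λ)
    (ergodic : fixedVectors U ≤ ℂ ∙ j 1) (measurable_four : ∀ a₁ a₂ a₃ a₄ : A,
      Measurable fun p : G × G => ω (τ p.1 a₁ * τ (p.2 * p.1) a₂ * τ p.2 a₃ * a₄)) (b : A)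
    (k : G) (x y : H) :
    Tendsto (fun n => ∫ h, inner ℂ (rightMul j b (U h x)) (U k (rightMul j b (U h y))) ∂μ[|Λ n])
      atTop (𝓝 (inner ℂ (j b) (U k (j b)) * inner ℂ x (U k y))) := by
  have hU := S.isMeasurableUnitaryRep
  have limit := hU.tendsto_integral_inner_correlation S.denseRange
    (S := inner ℂ (j b) (U k (j b)) • U k) (ν := fun n => μ[|Λ n]) (R := rightMul j b) (k := k)
    (fun x y => (S.measurable_inner_correlation measurable_four b x y).of_uncurry_right
      (f := fun h k => inner ℂ x (correlation U (rightMul j b) h k y))) (fun a a' => ?_) x y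
  · simpa only [smul_apply, inner_smul_right] using limit
  have rewrite : ∀ h, inner ℂ (rightMul j b (U h (j a))) (U k (rightMul j b (U h (j a')))) =
      inner ℂ (j (star (τ k b * star b))) (U h (j (star a * τ k a'))) := fun h => by
    rw [S.inner_rightMul_map, S.apply_eq, S.inner_eq, star_star, S.trace_comm (τ k b * star b),
      map_mul (τ h), S.action_mul, mul_comm h k, ← mul_assoc]
  have inner_one : inner ℂ (j (star (τ k b * star b))) (j 1) = inner ℂ (j b) (U k (j b)) := by
    rw [S.apply_eq, S.inner_eq, S.inner_eq, star_star, mul_one, S.trace_comm]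
  simp only [rewrite]
  have := hU.tendsto_integral_inner hΛ S.norm_apply_one S.one_mem_fixedVectors ergodic
    (j (star (τ k b * star b))) (j (star a * τ k a'))
  rwa [inner_one, S.inner_one_left, ← S.inner_eq, ← S.apply_eq, ← inner_smul_right] at this

variable [MeasurableInv G]

theorem exists_tendsto_zero_integral_le (S : IsGNSSystem ω τ j U) (hΛ : IsFolner μ Λ)
    (hΛ' : IsFolner μ fun n => (Λ n)⁻¹ * Λ n) (tempelman : IsTempelman μ Λ) {a b c : A}
    (hflight : j a ∈ flightVectors U ∨ j b ∈ flightVectors U ∨ j (star c) ∈ flightVectors U) :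
    ∃ β : ℕ → ℝ, Tendsto β atTop (𝓝 0) ∧ ∀ n z, ‖z‖ = 1 →
      ∫ h, ‖inner ℂ (j 1) (rightMul j b (U h (j a)))‖ * ‖inner ℂ z (U h (j c))‖ ∂μ[|Λ n] ≤
        β n := by
  have hU := S.isMeasurableUnitaryRep
  simp only [S.inner_one_rightMul_map]
  have first_factor :
      Tendsto (fun n => ∫ h, ‖inner ℂ (j (star b)) (U h (j a))‖ ∂μ[|Λ n]) atTop (𝓝 0) →
      ∃ β : ℕ → ℝ, Tendsto β atTop (𝓝 0) ∧ ∀ n z, ‖z‖ = 1 → ∫ h,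
        ‖inner ℂ (j (star b)) (U h (j a))‖ * ‖inner ℂ z (U h (j c))‖ ∂μ[|Λ n] ≤ β n := fun lim =>
    ⟨_, by simpa only [mul_zero] using lim.const_mul ‖j c‖, fun n z hz => by
      simpa only [hz, one_mul] using hU.integral_norm_inner_mul_le μ[|Λ n] _ _ z (j c)⟩
  rcases hflight with ha | hb | hc
  · exact first_factor (hU.tendsto_integral_norm_inner hΛ _ ha)
  · have inner_eq : ∀ h,
        ‖inner ℂ (j (star b)) (U h (j a))‖ = ‖inner ℂ (j b) (U h (j (star a)))‖ := fun h => by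
      rw [← S.norm_inner_apply_star h (star a), star_star]
    refine first_factor ?_
    simpa only [inner_eq] using hU.tendsto_integral_norm_inner' hΛ hb (j (star a))
  · have lim := (hU.tendsto_integral_integral_norm_inner hΛ hΛ' tempelman hc).sqrt.const_mul
      (‖j (star b)‖ * ‖j a‖)
    rw [Real.sqrt_zero, mul_zero] at lim
    have inner_eq : ∀ h k, ‖inner ℂ (U h (j (star c))) (U k (j (star c)))‖ =
        ‖inner ℂ (U h (j c)) (U k (j c))‖ := fun h k => by
      rw [S.apply_eq, S.apply_eq, S.apply_eq, S.apply_eq, map_star (τ h), map_star (τ k),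
        S.inner_star_star, norm_inner_symm]
    simp only [inner_eq] at lim
    refine ⟨_, lim, fun n z hz => ?_⟩
    simp only [mul_comm ‖inner ℂ (j (star b)) _‖]
    refine (hU.integral_norm_inner_mul_le μ[|Λ n] z (j c) (j (star b)) (j a)).trans ?_
    gcongr
    exact hU.integral_norm_inner_le_sqrt μ[|Λ n] hz (j c)

end IsGNSSystem

end GNS

theorem cor_5_4_1_general {A G H : Type*} [CStarAlgebra A] [CommGroup G] [MeasurableSpace G]
    [MeasurableMul₂ G] [MeasurableInv G] [NormedAddCommGroup H] [InnerProductSpace ℂ H]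
    [CompleteSpace H] {ω : A →ₗ[ℂ] ℂ} {τ : G → A ≃⋆ₐ[ℂ] A} {j : A →ₗ[ℂ] H} {U : G → H →L[ℂ] H}
    (S : IsGNSSystem ω τ j U) (ergodic : fixedVectors U ≤ ℂ ∙ j 1)
    (measurable_four : ∀ a₁ a₂ a₃ a₄ : A,
      Measurable fun p : G × G => ω (τ p.1 a₁ * τ (p.2 * p.1) a₂ * τ p.2 a₃ * a₄))
    {μ : Measure G} [μ.IsMulRightInvariant] {Λ₁ Λ₂ : ℕ → Set G} (hΛ₁ : IsFolner μ Λ₁)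
    (hΛ₁' : IsFolner μ fun n => (Λ₁ n)⁻¹ * Λ₁ n) (tempelman₁ : IsTempelman μ Λ₁)
    (hΛ₂ : IsUniformFolner μ Λ₂) (hΛ₂' : IsFolner μ fun n => (Λ₂ n)⁻¹ * Λ₂ n)
    (tempelman₂ : IsTempelman μ Λ₂) {a b c : A}
    (hflight : j a ∈ flightVectors U ∨ j b ∈ flightVectors U ∨ j (star c) ∈ flightVectors U) :
    Tendsto
      (fun n => ((μ (Λ₁ n)).toReal * (μ (Λ₂ n)).toReal)⁻¹ •
        ∫ h in Λ₁ n, ∫ g in Λ₂ n, j (τ (g * h) a * τ g b * τ h c) ∂μ ∂μ)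
      atTop (𝓝 0) := by
  have hU := S.isMeasurableUnitaryRep
  have vector_eq : ∀ g h, j (τ (g * h) a * τ g b * τ h c) =
      rightMul j (τ h c) (U g (rightMul j b (U h (j a)))) := fun g h => by
    rw [S.apply_eq, S.rightMul_apply, S.apply_eq, S.rightMul_apply, map_mul (τ g), S.action_mul]
  obtain ⟨β, hβ, le_β⟩ := S.exists_tendsto_zero_integral_le hΛ₁ hΛ₁' tempelman₁ hflight
  have limit := hU.tendsto_integral_integral_map hΛ₁ hΛ₂ hΛ₂' tempelman₂ S.norm_apply_one
    S.one_mem_fixedVectors ergodic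
    (fun x => by
      simpa only [inner_correlation] using S.measurable_inner_correlation measurable_four b x x)
    (fun x _ => ⟨_, ‖j b‖ * ‖j b‖,
      fun k => S.tendsto_integral_inner_rightMul_map hΛ₁ ergodic measurable_four b k x x,
      fun k => by rw [norm_mul]; gcongr; exact hU.norm_inner_le _ _ k⟩)
    (S.norm_rightMul_map_le · c)
    (fun h => by rw [S.rightMul_apply, one_mul, S.apply_eq]) hβ le_β
  simpa only [vector_eq, integral_cond_eq, integral_smul, smul_smul, mul_inv_rev,
    measureReal_def] using limit

/-- **Corollary 5.4(1).** -/
theorem cor_5_4_1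
    -- a unital C*-algebra A
    {A : Type*} [NormedRing A] [StarRing A] [CStarRing A] [NormedAlgebra ℂ A]
    [CompleteSpace A] [StarModule ℂ A]
    -- a tracial state ω on A
    (ω : A →ₗ[ℂ] ℂ) (hω_pos : ∀ a : A, 0 ≤ ω (star a * a)) (hω_one : ω 1 = 1)
    (hω_tracial : ∀ a b : A, ω (a * b) = ω (b * a))
    -- a second countable topological abelian group G with a σ-finite, right and left
    -- invariant measure μ on its Borel σ-algebra, with the inverse map μ-invariant
    {G : Type*} [CommGroup G] [TopologicalSpace G] [IsTopologicalGroup G]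
    [SecondCountableTopology G] [MeasurableSpace G] [BorelSpace G]
    (μ : Measure G) [SigmaFinite μ]
    (hRight : ∀ (V : Set G) (g : G), MeasurableSet V → μ (V * {g}) = μ V)
    (hLeft : ∀ (V : Set G) (g : G), MeasurableSet V → μ ({g} * V) = μ V)
    (hInvInv : ∀ V : Set G, MeasurableSet V → μ V⁻¹ = μ V)
    -- the action τ, making (A, ω, τ, G) a C*-dynamical system
    (τ : G → A ≃⋆ₐ[ℂ] A)
    (hτ_one : ∀ a : A, τ 1 a = a)
    (hτ_mul : ∀ g h a, τ g (τ h a) = τ (g * h) a)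
    (hω_inv : ∀ g a, ω (τ g a) = ω a)
    (hτ_meas : ∀ a b : A, Measurable fun g : G => ω (a * τ g b))
    -- the system is ergodic (w.r.t. some, equivalently every, Følner sequence in G)
    (hErg : ∃ Λ : ℕ → Set G, (∀ n, MeasurableSet (Λ n)) ∧
      (∀ᶠ n in atTop, 0 < μ (Λ n) ∧ μ (Λ n) < ⊤) ∧
      (∀ g : G, Tendsto
        (fun n => (μ (symmDiff (Λ n) (Λ n * {g}))).toReal / (μ (Λ n)).toReal)
        atTop (𝓝 0)) ∧
      ∀ a b : A, Tendsto
        (fun n => (μ (Λ n)).toReal⁻¹ • ∫ g in Λ n, ω (a * τ g b) ∂μ)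
        atTop (𝓝 (ω a * ω b)))
    -- (g,h,j,k) ↦ ω(τ_h(a₁) τ_g(a₂) τ_{gh}(a₃) τ_{jk}(a₄) τ_j(a₅) τ_k(a₆)) is
    -- Σ² × Σ²-measurable
    (hmeas6 : ∀ a₁ a₂ a₃ a₄ a₅ a₆ : A, Measurable fun q : (G × G) × (G × G) =>
      ω (τ q.1.2 a₁ * τ q.1.1 a₂ * τ (q.1.1 * q.1.2) a₃ *
        τ (q.2.1 * q.2.2) a₄ * τ q.2.1 a₅ * τ q.2.2 a₆))
    -- a uniform Følner sequence (Λ1 n) in G ...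
    (Λ1 : ℕ → Set G)
    (hΛ1meas : ∀ n, MeasurableSet (Λ1 n))
    (hΛ1fin : ∀ᶠ n in atTop, 0 < μ (Λ1 n) ∧ μ (Λ1 n) < ⊤)
    (hΛ1folner : ∀ g : G, Tendsto
      (fun n => (μ (symmDiff (Λ1 n) (Λ1 n * {g}))).toReal / (μ (Λ1 n)).toReal)
      atTop (𝓝 0))
    (hΛ1unif : ∀ᶠ m in atTop, ∀ ε > (0 : ℝ), ∀ᶠ n in atTop, ∀ g ∈ Λ1 m,
      (μ (symmDiff (Λ1 n) (Λ1 n * {g}))).toReal ≤ ε * (μ (Λ1 n)).toReal)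
    -- ... satisfying the Tempel'man condition ...
    (hΛ1temp : ∃ c : ℝ, 0 < c ∧ ∀ᶠ n in atTop, MeasurableSet ((Λ1 n)⁻¹ * Λ1 n) ∧
      μ ((Λ1 n)⁻¹ * Λ1 n) ≤ ENNReal.ofReal c * μ (Λ1 n))
    -- ... and such that (Λ1 n⁻¹ Λ1 n) is also Følner in G
    (hΛ1invfin : ∀ᶠ n in atTop, 0 < μ ((Λ1 n)⁻¹ * Λ1 n) ∧ μ ((Λ1 n)⁻¹ * Λ1 n) < ⊤)
    (hΛ1invfolner : ∀ g : G, Tendsto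
      (fun n => (μ (symmDiff ((Λ1 n)⁻¹ * Λ1 n) (((Λ1 n)⁻¹ * Λ1 n) * {g}))).toReal /
        (μ ((Λ1 n)⁻¹ * Λ1 n)).toReal)
      atTop (𝓝 0))
    -- a uniform Følner sequence (Λ2 n) in G ...
    (Λ2 : ℕ → Set G)
    (hΛ2meas : ∀ n, MeasurableSet (Λ2 n))
    (hΛ2fin : ∀ᶠ n in atTop, 0 < μ (Λ2 n) ∧ μ (Λ2 n) < ⊤)
    (hΛ2folner : ∀ g : G, Tendsto
      (fun n => (μ (symmDiff (Λ2 n) (Λ2 n * {g}))).toReal / (μ (Λ2 n)).toReal)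
      atTop (𝓝 0))
    (hΛ2unif : ∀ᶠ m in atTop, ∀ ε > (0 : ℝ), ∀ᶠ n in atTop, ∀ g ∈ Λ2 m,
      (μ (symmDiff (Λ2 n) (Λ2 n * {g}))).toReal ≤ ε * (μ (Λ2 n)).toReal)
    -- ... satisfying the Tempel'man condition ...
    (hΛ2temp : ∃ c : ℝ, 0 < c ∧ ∀ᶠ n in atTop, MeasurableSet ((Λ2 n)⁻¹ * Λ2 n) ∧
      μ ((Λ2 n)⁻¹ * Λ2 n) ≤ ENNReal.ofReal c * μ (Λ2 n))
    -- ... and such that (Λ2 n⁻¹ Λ2 n) is also Følner in G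
    (hΛ2invfin : ∀ᶠ n in atTop, 0 < μ ((Λ2 n)⁻¹ * Λ2 n) ∧ μ ((Λ2 n)⁻¹ * Λ2 n) < ⊤)
    (hΛ2invfolner : ∀ g : G, Tendsto
      (fun n => (μ (symmDiff ((Λ2 n)⁻¹ * Λ2 n) (((Λ2 n)⁻¹ * Λ2 n) * {g}))).toReal /
        (μ ((Λ2 n)⁻¹ * Λ2 n)).toReal)
      atTop (𝓝 0))
    -- a GNS representation (H, j) of (A, ω)
    {H : Type*} [NormedAddCommGroup H] [InnerProductSpace ℂ H] [CompleteSpace H]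
    (j : A →ₗ[ℂ] H) (hj_dense : DenseRange j)
    (hj_inner : ∀ a b : A, (inner ℂ (j a) (j b) : ℂ) = ω (star a * b))
    (U : G → H →L[ℂ] H) (hU : ∀ g a, U g (j a) = j (τ g a)) (hU_contr : ∀ g, ‖U g‖ ≤ 1)
    -- a, b, c ∈ A with at least one of ι(a), ι(b), ι(c*) a flight vector
    (a b c : A)
    (hflight : j a ∈ flightVectors U ∨ j b ∈ flightVectors U ∨ j (star c) ∈ flightVectors U)
    -- the system is asymptotically abelian with respect to (Λ1 n)
    (hcomm_meas : ∀ a b : A, Measurable fun g : G => ‖a * τ g b - τ g b * a‖)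
    (hAA : ∀ a b : A, Tendsto
      (fun n => (μ (Λ1 n)).toReal⁻¹ * ∫ g in Λ1 n, ‖a * τ g b - τ g b * a‖ ∂μ)
      atTop (𝓝 0))
 :
    -- conclusion
    Tendsto
      (fun n => ((μ (Λ1 n)).toReal * (μ (Λ2 n)).toReal)⁻¹ •
        ∫ h in Λ1 n, ∫ g in Λ2 n, j (τ (g * h) a * τ g b * τ h c) ∂μ ∂μ)
      atTop (𝓝 (0 : H)) := by
  let : CStarAlgebra A := {}
  have : μ.IsMulRightInvariant := isMulRightInvariant_of_measure_mul_singleton hRight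
  have S : IsGNSSystem ω τ j U :=
    ⟨hω_one, hω_tracial, hτ_one, hτ_mul, hω_inv, hτ_meas, hj_dense, hj_inner, hU⟩
  obtain ⟨Λ, -, pos_lt_top, -, ergodic⟩ := hErg
  have measurable_four (a₁ a₂ a₃ a₄ : A) :
      Measurable fun p : G × G => ω (τ p.1 a₁ * τ (p.2 * p.1) a₂ * τ p.2 a₃ * a₄) := by
    simpa only [Function.comp_def, map_one, mul_one, hτ_one] using
      (hmeas6 a₁ 1 a₂ 1 a₃ a₄).comp (f := fun p : G × G => ((p.2, p.1), (p.2, (1 : G))))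
        (by fun_prop)
  exact cor_5_4_1_general S
    (S.fixedVectors_le_span pos_lt_top
      (by simpa only [integral_cond_eq, measureReal_def] using ergodic))
    measurable_four ⟨.of_forall hΛ1meas, hΛ1fin, hΛ1folner⟩
    ⟨IsTempelman.eventually_measurableSet hΛ1temp, hΛ1invfin, hΛ1invfolner⟩ hΛ1temp
    ⟨⟨.of_forall hΛ2meas, hΛ2fin, hΛ2folner⟩, hΛ2unif⟩
    ⟨IsTempelman.eventually_measurableSet hΛ2temp, hΛ2invfin, hΛ2invfolner⟩ hΛ2temp hflight
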